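/- arXiv:1501.05388 — 3 statements merged into one kernel-verified Lean document; each statement's English description precedes it below -/
import Mathlib

section
/- Let p ≥ 1, let σ_1,…,σ_p be real numbers and λ_1,…,λ_p ≥ 0, and let q(x) = ∏_{k=1}^p Γ(x+λ_k)^{σ_k} for x > 0. Then q is logarithmically completely monotonic on (0,∞) if and only if Σ_{k=1}^p σ_k = 0 and v(t) = Σ_{k=1}^p σ_k t^{λ_k} ≥ 0 for all t ∈ (0,1]. -/
open MeasureTheory

/-- A function `f` is completely monotonic on `(0,∞)` if it is infinitely
differentiable there and `(-1)^n f^(n)(x) ≥ 0` for all `n ≥ 0` and `x > 0`. -/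
def CompletelyMonotonicOn (f : ℝ → ℝ) : Prop :=
  (∀ x > (0 : ℝ), ContDiffAt ℝ (⊤ : ℕ∞) f x) ∧
    ∀ (n : ℕ), ∀ x > (0 : ℝ), 0 ≤ (-1 : ℝ) ^ n * iteratedDeriv n f x

/-- A positive function `f` on `(0,∞)` is logarithmically completely monotonic
if `-(log f)'` is completely monotonic on `(0,∞)`. -/
def LogCompletelyMonotonic (f : ℝ → ℝ) : Prop :=
  (∀ x > (0 : ℝ), 0 < f x) ∧
    CompletelyMonotonicOn (fun x => -deriv (fun y => Real.log (f y)) x)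

open Filter Topology

noncomputable def psiR (x : ℝ) : ℝ := deriv (Real.log ∘ Real.Gamma) x

noncomputable def Gs {p : ℕ} (σ lam : Fin p → ℝ) (m : ℕ) (y : ℝ) : ℝ :=
  ∑ k, σ k * ((m.factorial : ℝ) / (y + lam k) ^ (m + 1))

lemma chain_iter (F : ℕ → ℝ → ℝ) (hF : ∀ m, ∀ x > 0, HasDerivAt (F m) (-F (m + 1) x) x)
    (f : ℝ → ℝ) (h0 : ∀ x > 0, f x = F 0 x) :
    ∀ n, ∀ x > 0, iteratedDeriv n f x = (-1) ^ n * F n x := by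
  intro n
  induction n with
  | zero => intro x hx; simp [h0 x hx]
  | succ n ih =>
    intro x hx
    rw [iteratedDeriv_succ]
    have : iteratedDeriv n f =ᶠ[𝓝 x] fun y => (-1) ^ n * F n y := by
      filter_upwards [Ioi_mem_nhds hx] with y hy using ih y hy
    rw [this.deriv_eq, ((hF n x hx).const_mul _).deriv]
    ring

lemma chain_contDiff (F : ℕ → ℝ → ℝ) (hF : ∀ m, ∀ x > 0, HasDerivAt (F m) (-F (m + 1) x) x)
    (f : ℝ → ℝ) (h0 : ∀ x > 0, f x = F 0 x) :
    ∀ x > (0 : ℝ), ContDiffAt ℝ (⊤ : ℕ∞) f x := by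
  have h : ContDiffOn ℝ (⊤ : ℕ∞) f (Set.Ioi 0) := by
    apply contDiffOn_of_differentiableOn_deriv
    intro m _
    have h1 : DifferentiableOn ℝ (fun x => (-1) ^ m * F m x) (Set.Ioi 0) := fun x hx =>
      ((hF m x hx).const_mul _).differentiableAt.differentiableWithinAt
    refine h1.congr ?_
    intro x hx
    rw [iteratedDerivWithin_of_isOpen isOpen_Ioi hx, chain_iter F hF f h0 m x hx]
  intro x hx
  exact h.contDiffAt (Ioi_mem_nhds hx)

lemma smooth_chain (f : ℝ → ℝ) (hf : ∀ x > (0 : ℝ), ContDiffAt ℝ (⊤ : ℕ∞) f x) (n : ℕ) (x : ℝ)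
    (hx : 0 < x) : HasDerivAt (iteratedDeriv n f) (iteratedDeriv (n + 1) f x) x := by
  have h : ContDiffOn ℝ (⊤ : ℕ∞) f (Set.Ioi 0) := fun y hy => (hf y hy).contDiffWithinAt
  have h1 := h.differentiableOn_iteratedDerivWithin (m := n) (by exact_mod_cast WithTop.coe_lt_top n)
    isOpen_Ioi.uniqueDiffOn
  have h2 : DifferentiableOn ℝ (iteratedDeriv n f) (Set.Ioi 0) :=
    h1.congr fun y hy => (iteratedDerivWithin_of_isOpen isOpen_Ioi hy).symm
  rw [iteratedDeriv_succ]
  exact (h2.differentiableAt (Ioi_mem_nhds hx)).hasDerivAt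

lemma diff_logGamma {x : ℝ} (hx : 0 < x) : DifferentiableAt ℝ (Real.log ∘ Real.Gamma) x := by
  have h1 : DifferentiableAt ℝ Real.Gamma x := Real.differentiableAt_Gamma fun m => by
    have : (0 : ℝ) ≤ m := Nat.cast_nonneg m
    linarith
  exact h1.log (Real.Gamma_pos_of_pos hx).ne'

lemma hasDeriv_logGamma {x : ℝ} (hx : 0 < x) :
    HasDerivAt (Real.log ∘ Real.Gamma) (psiR x) x := (diff_logGamma hx).hasDerivAt

lemma psi_mono : MonotoneOn psiR (Set.Ioi 0) :=
  Real.convexOn_log_Gamma.monotoneOn_deriv fun _ hx => diff_logGamma hx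

lemma psi_add_one {x : ℝ} (hx : 0 < x) : psiR (x + 1) = psiR x + 1 / x := by
  have h1 : HasDerivAt (fun y => (Real.log ∘ Real.Gamma) (y + 1)) (psiR (x + 1)) x :=
    (hasDeriv_logGamma (by linarith : 0 < x + 1)).comp_add_const x 1
  have h2 := (Real.hasDerivAt_log hx.ne').add (hasDeriv_logGamma hx)
  have h3 : (fun y => (Real.log ∘ Real.Gamma) (y + 1)) =ᶠ[𝓝 x]
      (Real.log + Real.log ∘ Real.Gamma) := by
    filter_upwards [Ioi_mem_nhds hx] with y hy
    have hy : 0 < y := hy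
    simp only [Function.comp, Pi.add_apply]
    rw [Real.Gamma_add_one hy.ne', Real.log_mul hy.ne' (Real.Gamma_pos_of_pos hy).ne']
  have h4 := h1.unique (h2.congr_of_eventuallyEq h3)
  rw [h4]; simp; ring

lemma psi_add_nat {x : ℝ} (hx : 0 < x) (j : ℕ) : psiR (x + j) ≤ psiR x + j / x := by
  induction j with
  | zero => simp
  | succ j ih =>
    have hj : (0 : ℝ) ≤ j := Nat.cast_nonneg j
    have := psi_add_one (by linarith : 0 < x + j)
    push_cast
    rw [← add_assoc, this]
    have : 1 / (x + j) ≤ 1 / x := one_div_le_one_div_of_le hx (by linarith)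
    have : ((j : ℝ) + 1) / x = j / x + 1 / x := by ring
    linarith

lemma psi_diff_tendsto (l : ℝ) (hl : 0 ≤ l) :
    Tendsto (fun y => psiR (y + l) - psiR y) atTop (𝓝 0) := by
  obtain ⟨j, hj⟩ := exists_nat_ge l
  have h : Tendsto (fun y : ℝ => (j : ℝ) / y) atTop (𝓝 0) := tendsto_const_nhds.div_atTop tendsto_id
  refine tendsto_of_tendsto_of_tendsto_of_le_of_le' tendsto_const_nhds h ?_ ?_
  · filter_upwards [eventually_gt_atTop 0] with y hy
    have : psiR y ≤ psiR (y + l) :=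
      psi_mono hy (by simp only [Set.mem_Ioi]; linarith) (by linarith)
    linarith
  · filter_upwards [eventually_gt_atTop 0] with y hy
    have h1 : psiR (y + l) ≤ psiR (y + j) :=
      psi_mono (by simp only [Set.mem_Ioi]; linarith) (by simp only [Set.mem_Ioi]; linarith)
        (by linarith)
    have := psi_add_nat hy j
    linarith

noncomputable def fq {p : ℕ} (σ lam : Fin p → ℝ) (x : ℝ) : ℝ := -∑ k, σ k * psiR (x + lam k)

lemma q_pos {p : ℕ} (σ lam : Fin p → ℝ) (hlam : ∀ k, 0 ≤ lam k)
    {x : ℝ} (hx : 0 < x) : 0 < ∏ k, Real.Gamma (x + lam k) ^ (σ k) :=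
  Finset.prod_pos fun k _ => Real.rpow_pos_of_pos
    (Real.Gamma_pos_of_pos (by linarith [hlam k])) _

lemma deriv_q {p : ℕ} (σ lam : Fin p → ℝ) (hlam : ∀ k, 0 ≤ lam k)
    {x : ℝ} (hx : 0 < x) :
    -deriv (fun y => Real.log (∏ k, Real.Gamma (y + lam k) ^ (σ k))) x = fq σ lam x := by
  have h : (fun y => Real.log (∏ k, Real.Gamma (y + lam k) ^ (σ k))) =ᶠ[𝓝 x]
      fun y => ∑ k, σ k * (Real.log ∘ Real.Gamma) (y + lam k) := by
    filter_upwards [Ioi_mem_nhds hx] with y hy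
    have hy : 0 < y := hy
    have hp : ∀ k, 0 < Real.Gamma (y + lam k) := fun k =>
      Real.Gamma_pos_of_pos (by linarith [hlam k])
    rw [Real.log_prod fun k _ => (Real.rpow_pos_of_pos (hp k) _).ne']
    exact Finset.sum_congr rfl fun k _ => Real.log_rpow (hp k) _
  rw [h.deriv_eq, fq]
  congr 1
  refine HasDerivAt.deriv (HasDerivAt.fun_sum fun k _ => HasDerivAt.const_mul _ ?_)
  exact (hasDeriv_logGamma (by linarith [hlam k] : 0 < x + lam k)).comp_add_const x (lam k)

lemma fq_sub {p : ℕ} (σ lam : Fin p → ℝ) (hlam : ∀ k, 0 ≤ lam k)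
    {x : ℝ} (hx : 0 < x) : fq σ lam x - fq σ lam (x + 1) = Gs σ lam 0 x := by
  simp only [fq, Gs]
  rw [neg_sub_neg, ← Finset.sum_sub_distrib]
  refine Finset.sum_congr rfl fun k _ => ?_
  rw [show x + 1 + lam k = x + lam k + 1 by ring, psi_add_one (by linarith [hlam k])]
  simp
  ring

lemma fq_tele {p : ℕ} (σ lam : Fin p → ℝ) (hlam : ∀ k, 0 ≤ lam k)
    {x : ℝ} (hx : 0 < x) (N : ℕ) :
    ∑ n ∈ Finset.range N, Gs σ lam 0 (x + n) = fq σ lam x - fq σ lam (x + N) := by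
  induction N with
  | zero => simp
  | succ N ih =>
    have hN : (0 : ℝ) ≤ N := Nat.cast_nonneg N
    rw [Finset.sum_range_succ, ih, ← fq_sub σ lam hlam (by linarith)]
    push_cast
    rw [← add_assoc]; ring

lemma fq_tendsto {p : ℕ} (σ lam : Fin p → ℝ) (hlam : ∀ k, 0 ≤ lam k)
    (hS : ∑ k, σ k = 0) : Tendsto (fq σ lam) atTop (𝓝 0) := by
  have h : Tendsto (fun y => -∑ k, σ k * (psiR (y + lam k) - psiR y)) atTop (𝓝 (-∑ k, σ k * 0)) :=
    (tendsto_finsetSum _ fun k _ => (psi_diff_tendsto (lam k) (hlam k)).const_mul _).neg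
  simp only [mul_zero, Finset.sum_const_zero, neg_zero] at h
  refine h.congr fun y => ?_
  simp only [fq, mul_sub, Finset.sum_sub_distrib]
  rw [← Finset.sum_mul, hS]; simp

lemma Gs_deriv {p : ℕ} (σ lam : Fin p → ℝ) (hlam : ∀ k, 0 ≤ lam k)
    (m : ℕ) {x : ℝ} (hx : 0 < x) :
    HasDerivAt (Gs σ lam m) (-Gs σ lam (m + 1) x) x := by
  have : -Gs σ lam (m + 1) x = ∑ k, σ k * (-((m + 1).factorial : ℝ) / (x + lam k) ^ (m + 2)) := by
    simp only [Gs]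
    rw [← Finset.sum_neg_distrib]
    refine Finset.sum_congr rfl fun k _ => by ring
  rw [this]
  refine HasDerivAt.fun_sum fun k _ => HasDerivAt.const_mul _ ?_
  have hp : 0 < x + lam k := by linarith [hlam k]
  have h1 : HasDerivAt (fun y : ℝ => (y + lam k) ^ (m + 1)) (((m + 1 : ℕ) : ℝ) * (x + lam k) ^ m * 1) x := by
    exact ((hasDerivAt_id x).add_const (lam k)).pow (m + 1)
  have h2 := (hasDerivAt_const x (m.factorial : ℝ)).div h1 (pow_pos hp _).ne'
  refine h2.congr_deriv ?_
  rw [Nat.factorial_succ]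
  push_cast
  field_simp
  ring

lemma Gs_integral_nonneg {p : ℕ} (σ lam : Fin p → ℝ) (hlam : ∀ k, 0 ≤ lam k)
    (hv : ∀ t ∈ Set.Ioc (0 : ℝ) 1, 0 ≤ ∑ k, σ k * t ^ lam k) (m : ℕ)
    {y : ℝ} (hy : 0 < y) : 0 ≤ Gs σ lam m y := by
  have key : ∀ k, ∫ t in Set.Ioi (0 : ℝ), t ^ (((m : ℝ) + 1) - 1) * Real.exp (-((y + lam k) * t)) =
      (m.factorial : ℝ) / (y + lam k) ^ (m + 1) := by
    intro k
    have hp : 0 < y + lam k := by linarith [hlam k]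
    rw [Real.integral_rpow_mul_exp_neg_mul_Ioi (by positivity) hp, Real.Gamma_nat_eq_factorial]
    rw [show (m : ℝ) + 1 = ((m + 1 : ℕ) : ℝ) by push_cast; ring, Real.rpow_natCast]
    rw [one_div, inv_pow]; field_simp
  have hint : ∀ k, IntegrableOn (fun t : ℝ => t ^ (((m : ℝ) + 1) - 1) *
      Real.exp (-((y + lam k) * t))) (Set.Ioi 0) := by
    intro k
    have hp : 0 < y + lam k := by linarith [hlam k]
    apply Integrable.of_integral_ne_zero
    rw [key k]
    positivity
  have e : Gs σ lam m y = ∫ t in Set.Ioi (0 : ℝ), ∑ k, σ k * (t ^ (((m : ℝ) + 1) - 1) *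
      Real.exp (-((y + lam k) * t))) := by
    rw [integral_finsetSum _ fun k _ => (hint k).const_mul _]
    simp only [Gs, integral_const_mul, key]
  rw [e]
  refine setIntegral_nonneg measurableSet_Ioi fun t ht => ?_
  have ht : 0 < t := ht
  have h1 := hv (Real.exp (-t)) ⟨Real.exp_pos _, Real.exp_le_one_iff.2 (by linarith)⟩
  have : ∑ k, σ k * (t ^ (((m : ℝ) + 1) - 1) * Real.exp (-((y + lam k) * t))) =
      (t ^ (((m : ℝ) + 1) - 1) * Real.exp (-(y * t))) * ∑ k, σ k * Real.exp (-t) ^ lam k := by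
    rw [Finset.mul_sum]
    refine Finset.sum_congr rfl fun k _ => ?_
    rw [← Real.exp_mul, show -((y + lam k) * t) = -(y * t) + -t * lam k by ring, Real.exp_add]
    ring
  rw [this]
  exact mul_nonneg (mul_nonneg (Real.rpow_nonneg ht.le _) (Real.exp_pos _).le) h1

lemma Gs_bound {p : ℕ} (σ lam : Fin p → ℝ) (hlam : ∀ k, 0 ≤ lam k)
    (m : ℕ) {a y : ℝ} (ha : 0 < a) (hy : a < y) (n : ℕ) :
    ‖Gs σ lam (m + 1) (y + n)‖ ≤
      ((∑ k, |σ k|) * ((m + 1).factorial / a ^ m)) * (1 / |(n : ℝ) + a| ^ (2 : ℝ)) := by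
  have hn : (0 : ℝ) ≤ n := Nat.cast_nonneg n
  rw [Gs, Real.norm_eq_abs, Finset.sum_mul, Finset.sum_mul]
  refine (Finset.abs_sum_le_sum_abs _ _).trans (Finset.sum_le_sum fun k _ => ?_)
  have hp : 0 < y + n + lam k := by linarith [hlam k]
  rw [abs_mul, mul_assoc]
  refine mul_le_mul_of_nonneg_left ?_ (abs_nonneg _)
  have h2 : (2 : ℝ) = ((2 : ℕ) : ℝ) := by norm_num
  rw [abs_of_nonneg (by positivity), abs_of_pos (by linarith), h2, Real.rpow_natCast,
    div_mul_div_comm, mul_one]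
  refine div_le_div_of_nonneg_left (by positivity) (by positivity) ?_
  rw [show m + 1 + 1 = m + 2 by ring, pow_add]
  have := hlam k
  have e1 : a ≤ y + n + lam k := by linarith
  have e2 : n + a ≤ y + n + lam k := by linarith
  gcongr

lemma Gs_summable_succ {p : ℕ} (σ lam : Fin p → ℝ) (hlam : ∀ k, 0 ≤ lam k)
    (m : ℕ) {x : ℝ} (hx : 0 < x) :
    Summable fun n : ℕ => Gs σ lam (m + 1) (x + n) := by
  have h := ((Real.summable_one_div_nat_add_rpow (x / 2) 2).2 (by norm_num)).mul_left
    ((∑ k, |σ k|) * ((m + 1).factorial / (x / 2) ^ m))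
  exact Summable.of_norm_bounded h fun n =>
    Gs_bound σ lam hlam m (by linarith) (by linarith) n

lemma A_deriv {p : ℕ} (σ lam : Fin p → ℝ) (hlam : ∀ k, 0 ≤ lam k)
    (hs : ∀ x > 0, Summable fun n : ℕ => Gs σ lam 0 (x + n)) (m : ℕ) {x : ℝ}
    (hx : 0 < x) : HasDerivAt (fun z => ∑' n : ℕ, Gs σ lam m (z + n))
      (-∑' n : ℕ, Gs σ lam (m + 1) (x + n)) x := by
  have h := ((Real.summable_one_div_nat_add_rpow (x / 2) 2).2 (by norm_num)).mul_left
    ((∑ k, |σ k|) * ((m + 1).factorial / (x / 2) ^ m))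
  rw [← tsum_neg]
  have hx2 : x ∈ Set.Ioi (x / 2) := by simp only [Set.mem_Ioi]; linarith
  refine hasDerivAt_tsum_of_isPreconnected (g := fun (n : ℕ) z => Gs σ lam m (z + n))
    (g' := fun (n : ℕ) z => -Gs σ lam (m + 1) (z + n)) (t := Set.Ioi (x / 2)) (y₀ := x)
    h isOpen_Ioi isPreconnected_Ioi ?_ ?_ hx2 ?_ hx2
  · intro n y hy
    have hy : x / 2 < y := hy
    have hn : (0 : ℝ) ≤ n := Nat.cast_nonneg n
    exact (Gs_deriv σ lam hlam m (by linarith : 0 < y + n)).comp_add_const y n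
  · intro n y hy
    rw [norm_neg]
    exact Gs_bound σ lam hlam m (by linarith) hy n
  · cases m with
    | zero => exact hs x hx
    | succ m => exact Gs_summable_succ σ lam hlam m hx

lemma suff {p : ℕ} (σ lam : Fin p → ℝ) (hlam : ∀ k, 0 ≤ lam k)
    (hS : ∑ k, σ k = 0) (hv : ∀ t ∈ Set.Ioc (0 : ℝ) 1, 0 ≤ ∑ k, σ k * t ^ lam k)
    (f : ℝ → ℝ) (hf : ∀ x > 0, f x = fq σ lam x) : CompletelyMonotonicOn f := by
  have hpos : ∀ m, ∀ x > 0, ∀ n : ℕ, 0 ≤ Gs σ lam m (x + n) := fun m x hx n =>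
    Gs_integral_nonneg σ lam hlam hv m (by positivity)
  have hsum : ∀ x > 0, HasSum (fun n : ℕ => Gs σ lam 0 (x + n)) (fq σ lam x) := by
    intro x hx
    rw [hasSum_iff_tendsto_nat_of_nonneg (hpos 0 x hx)]
    simp only [fq_tele σ lam hlam hx]
    have h1 : Tendsto (fun N : ℕ => x + (N : ℝ)) atTop atTop :=
      tendsto_atTop_add_const_left _ _ tendsto_natCast_atTop_atTop
    simpa using tendsto_const_nhds.sub ((fq_tendsto σ lam hlam hS).comp h1)
  have hd : ∀ m, ∀ x > 0, HasDerivAt ((fun m z => ∑' n : ℕ, Gs σ lam m (z + n)) m)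
      (-(fun m z => ∑' n : ℕ, Gs σ lam m (z + n)) (m + 1) x) x := fun m x hx =>
    A_deriv σ lam hlam (fun x hx => (hsum x hx).summable) m hx
  have h0 : ∀ x > 0, f x = (fun m z => ∑' n : ℕ, Gs σ lam m (z + n)) 0 x := fun x hx => by
    rw [hf x hx]; exact (hsum x hx).tsum_eq.symm
  refine ⟨chain_contDiff _ hd f h0, fun n x hx => ?_⟩
  rw [chain_iter _ hd f h0 n x hx, ← mul_assoc, ← mul_pow]
  simp only [neg_mul_neg, one_mul, one_pow]
  exact tsum_nonneg (hpos n x hx)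

lemma nec_G {p : ℕ} (σ lam : Fin p → ℝ) (hlam : ∀ k, 0 ≤ lam k)
    (f : ℝ → ℝ) (hf : ∀ x > 0, f x = fq σ lam x) (h : CompletelyMonotonicOn f) (m : ℕ)
    {x : ℝ} (hx : 0 < x) : 0 ≤ Gs σ lam m x := by
  obtain ⟨hc, hn⟩ := h
  have hd1 : ∀ m, ∀ x > 0, HasDerivAt (fun z => (-1 : ℝ) ^ m * iteratedDeriv m f z)
      (-((-1 : ℝ) ^ (m + 1) * iteratedDeriv (m + 1) f x)) x := fun m x hx =>
    ((smooth_chain f hc m x hx).const_mul _).congr_deriv (by ring)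
  have hanti : AntitoneOn (fun z => (-1 : ℝ) ^ m * iteratedDeriv m f z) (Set.Ioi 0) := by
    apply antitoneOn_of_deriv_nonpos (convex_Ioi 0)
    · exact fun y hy => (hd1 m y hy).continuousAt.continuousWithinAt
    · rw [interior_Ioi]
      exact fun y hy => (hd1 m y hy).differentiableAt.differentiableWithinAt
    · rw [interior_Ioi]
      intro y hy
      rw [(hd1 m y hy).deriv]
      linarith [hn (m + 1) y hy]
  have hle := hanti (show x ∈ Set.Ioi 0 from hx)
    (show x + 1 ∈ Set.Ioi 0 by simp only [Set.mem_Ioi]; linarith) (by linarith)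
  simp only at hle
  have c1 := chain_iter (fun m z => (-1 : ℝ) ^ m * iteratedDeriv m f z -
      (-1 : ℝ) ^ m * iteratedDeriv m f (z + 1))
    (fun m x hx => ((hd1 m x hx).sub ((hd1 m (x + 1) (by linarith)).comp_add_const x 1)).congr_deriv
      (by ring)) (Gs σ lam 0) (fun y hy => by
        simp only [pow_zero, one_mul, iteratedDeriv_zero]
        rw [hf y hy, hf (y + 1) (by linarith), fq_sub σ lam hlam hy]) m x hx
  have c2 := chain_iter (Gs σ lam) (fun m x hx => Gs_deriv σ lam hlam m hx) (Gs σ lam 0)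
    (fun _ _ => rfl) m x hx
  rw [c1] at c2
  have c3 := mul_left_cancel₀ (pow_ne_zero m (by norm_num : (-1 : ℝ) ≠ 0)) c2
  rw [← c3]
  linarith

lemma nec_v {p : ℕ} (σ lam : Fin p → ℝ) (hlam : ∀ k, 0 ≤ lam k)
    (hG : ∀ m, ∀ x > 0, 0 ≤ Gs σ lam m x) {t : ℝ} (ht : 0 < t) (ht1 : t < 1) :
    0 ≤ ∑ k, σ k * t ^ lam k := by
  set u := -Real.log t with hu
  have hu0 : 0 < u := by have := Real.log_neg ht ht1; linarith
  have hk : ∀ k, Tendsto (fun n : ℕ => σ k * (((1 + lam k * u / n) ^ n)⁻¹ * (1 + lam k * u / n)⁻¹))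
      atTop (𝓝 (σ k * t ^ lam k)) := by
    intro k
    have h1 := (Real.tendsto_one_add_div_pow_exp (lam k * u)).inv₀ (Real.exp_pos _).ne'
    have h2 : Tendsto (fun n : ℕ => (1 + lam k * u / (n : ℝ))⁻¹) atTop (𝓝 ((1 + 0)⁻¹)) :=
      (tendsto_const_nhds.add (tendsto_const_div_atTop_nhds_zero_nat _)).inv₀ (by norm_num)
    have h3 := (h1.mul h2).const_mul (σ k)
    convert h3 using 2
    rw [Real.rpow_def_of_pos ht, ← Real.exp_neg, hu]
    simp only [add_zero, inv_one, mul_one]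
    congr 2; ring
  refine ge_of_tendsto (tendsto_finsetSum Finset.univ fun k _ => hk k) ?_
  filter_upwards [eventually_gt_atTop 0] with n hn
  have hn' : (0 : ℝ) < n := by exact_mod_cast hn
  have hx : 0 < (n : ℝ) / u := by positivity
  have hg := hG n _ hx
  have : ∑ k, σ k * (((1 + lam k * u / n) ^ n)⁻¹ * (1 + lam k * u / n)⁻¹) =
      ((n / u) ^ (n + 1) / n.factorial) * Gs σ lam n (n / u) := by
    rw [Gs, Finset.mul_sum]
    refine Finset.sum_congr rfl fun k _ => ?_
    have e : (n : ℝ) / u + lam k = (n / u) * (1 + lam k * u / n) := by field_simp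
    have hp : 0 < 1 + lam k * u / n := by have := hlam k; positivity
    have hf : (n.factorial : ℝ) ≠ 0 := by positivity
    rw [e, mul_pow, ← mul_inv, ← pow_succ]
    generalize 1 + lam k * u / n = z at *
    generalize (n : ℝ) / u = w at *
    field_simp
  rw [this]
  positivity

lemma nec_S {p : ℕ} (σ lam : Fin p → ℝ) (hlam : ∀ k, 0 ≤ lam k)
    (f0 : ∀ x > 0, 0 ≤ fq σ lam x) (hG : ∀ x > 0, 0 ≤ Gs σ lam 0 x) :
    ∑ k, σ k = 0 := by
  have hlim : Tendsto (fun y => y * Gs σ lam 0 y) atTop (𝓝 (∑ k, σ k)) := by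
    have h : Tendsto (fun y : ℝ => ∑ k, σ k * (1 - lam k / (y + lam k))) atTop
        (𝓝 (∑ k, σ k * (1 - 0))) :=
      tendsto_finsetSum _ fun k _ => (tendsto_const_nhds.sub (tendsto_const_nhds.div_atTop
        (tendsto_atTop_add_const_right _ _ tendsto_id))).const_mul _
    simp only [sub_zero, mul_one] at h
    refine h.congr' ?_
    filter_upwards [eventually_gt_atTop 0] with y hy
    rw [Gs, Finset.mul_sum]
    refine Finset.sum_congr rfl fun k _ => ?_
    have hp : 0 < y + lam k := by linarith [hlam k]
    simp only [Nat.factorial_zero, Nat.cast_one, zero_add, pow_one]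
    field_simp
    ring
  have hS0 : 0 ≤ ∑ k, σ k := ge_of_tendsto hlim (by
    filter_upwards [eventually_gt_atTop 0] with y hy using mul_nonneg hy.le (hG y hy))
  by_contra hne
  have hS : 0 < ∑ k, σ k := lt_of_le_of_ne hS0 (Ne.symm hne)
  set S := ∑ k, σ k
  obtain ⟨Y, hY⟩ := eventually_atTop.1 (hlim.eventually (lt_mem_nhds (half_lt_self hS)))
  obtain ⟨M, hM⟩ := exists_nat_ge (max Y 1)
  have hMY : Y ≤ M := (le_max_left _ _).trans hM
  have hM1 : (1 : ℝ) ≤ M := (le_max_right _ _).trans hM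
  have hM0 : (0 : ℝ) < M := by linarith
  have hb : ∀ N : ℕ, (S / 2 / M) * ∑ i ∈ Finset.range N, (1 / (i + 1) : ℝ) ≤ fq σ lam M := by
    intro N
    have h1 := fq_tele σ lam hlam hM0 N
    have h2 := f0 ((M : ℝ) + N) (by positivity)
    refine le_trans ?_ (by linarith : ∑ n ∈ Finset.range N, Gs σ lam 0 (M + n) ≤ fq σ lam M)
    rw [Finset.mul_sum]
    refine Finset.sum_le_sum fun i _ => ?_
    have hi : (0 : ℝ) ≤ i := Nat.cast_nonneg i
    have h3 := hY (M + i) (by linarith)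
    have h4 : S / 2 / (M + i) ≤ Gs σ lam 0 (M + i) := by
      rw [div_le_iff₀ (by linarith)]; linarith
    refine le_trans ?_ h4
    rw [div_mul_div_comm, mul_one]
    refine div_le_div_of_nonneg_left (by linarith) (by linarith) ?_
    nlinarith
  have ht := Real.tendsto_sum_range_one_div_nat_succ_atTop.const_mul_atTop
    (by positivity : 0 < S / 2 / M)
  obtain ⟨N, hN⟩ := (ht.eventually_gt_atTop (fq σ lam M)).exists
  linarith [hb N]

theorem stmt1 (p : ℕ) (hp : 1 ≤ p) (σ lam : Fin p → ℝ) (hlam : ∀ k, 0 ≤ lam k) :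
    LogCompletelyMonotonic (fun x => ∏ k, Real.Gamma (x + lam k) ^ (σ k)) ↔
      ((∑ k, σ k = 0) ∧ ∀ t ∈ Set.Ioc (0 : ℝ) 1, 0 ≤ ∑ k, σ k * t ^ lam k) := by
  have hf : ∀ x > 0, (fun x => -deriv (fun y => Real.log
      ((fun x => ∏ k, Real.Gamma (x + lam k) ^ (σ k)) y)) x) x = fq σ lam x :=
    fun x hx => deriv_q σ lam hlam hx
  constructor
  · rintro ⟨-, h⟩
    have hG : ∀ m, ∀ x > 0, 0 ≤ Gs σ lam m x := fun m x hx => nec_G σ lam hlam _ hf h m hx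
    have f0 : ∀ x > 0, 0 ≤ fq σ lam x := fun x hx => by
      have := h.2 0 x hx
      rw [iteratedDeriv_zero, pow_zero, one_mul] at this
      exact this.trans_eq (hf x hx)
    have hS := nec_S σ lam hlam f0 (hG 0)
    refine ⟨hS, fun t ht => ?_⟩
    rcases lt_or_eq_of_le ht.2 with h1 | h1
    · exact nec_v σ lam hlam hG ht.1 h1
    · subst h1; simp [hS]
  · rintro ⟨hS, hv⟩
    exact ⟨fun x hx => q_pos σ lam hlam hx, suff σ lam hlam hS hv _ hf⟩
end

section
/- Let p ≥ 1 and let a_1,…,a_p, b_1,…,b_p be nonnegative reals with μ = Σ_{k=1}^p (b_k − a_k) > 0. For 0 < x < 1 let G(x) denote Meijer's G-function G^{p,0}_{p,p}(x | b ; a) defined as G(x) = lim_{R→∞} (1/(2π)) ∫_{−R}^{R} [∏_{k=1}^p Γ(a_k + c + it) / ∏_{k=1}^p Γ(b_k + c + it)] · x^{−(c+it)} dt, where c > −min_k a_k is arbitrary (the value is real and independent of c). Then for every 0 < x < 1, log(1/x) · G(x) = ∫_x^1 G(t) · [Σ_{k=1}^p ((x/t)^{a_k} − (x/t)^{b_k})]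 / (t − x) dt. -/
open MeasureTheory Filter

section
variable {p : ℕ}

lemma aux_log (b d : ℝ) (hb : 0 ≤ b) (_hd : 0 ≤ d) : ∃ K : ℝ, 0 ≤ K ∧ ∀ u : ℂ, 0 ≤ u.re → ‖u‖ ≤ d →
    |Real.log ‖1 + (b:ℂ) * u‖ - b * u.re| ≤ K * ‖u‖ ^ 2 := by
  refine ⟨b ^ 2 + (2 * b + b ^ 2 * d) ^ 2, by positivity, ?_⟩
  intro u hu hud
  set r := ‖u‖ with hr
  have hr0 : 0 ≤ r := norm_nonneg u
  have hre : u.re ≤ r := Complex.re_le_norm u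
  have hn : ‖1 + (b:ℂ) * u‖ ^ 2 = 1 + (2 * b * u.re + b ^ 2 * r ^ 2) := by
    rw [hr, ← Complex.normSq_eq_norm_sq, ← Complex.normSq_eq_norm_sq, Complex.normSq_apply, Complex.normSq_apply]
    simp
    ring
  set y := 2 * b * u.re + b ^ 2 * r ^ 2 with hy
  have hy0 : 0 ≤ y := by positivity
  have hlog : Real.log ‖1 + (b:ℂ) * u‖ = Real.log (1 + y) / 2 := by
    rw [← hn, Real.log_pow]; push_cast; ring
  have h1 : Real.log (1 + y) ≤ y := by
    have := Real.log_le_sub_one_of_pos (show 0 < 1 + y by linarith); linarith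
  have h2 : y - y ^ 2 ≤ Real.log (1 + y) := by
    have := Real.one_sub_inv_le_log_of_pos (show 0 < 1 + y by linarith)
    have h3 : y - y ^ 2 ≤ 1 - (1 + y)⁻¹ := by
      have : (1 - (1 + y)⁻¹) = y / (1 + y) := by field_simp; ring
      rw [this, le_div_iff₀ (by linarith)]
      nlinarith [pow_nonneg hy0 3]
    linarith
  have hyr : y ≤ (2 * b + b ^ 2 * d) * r := by
    have h5 : 2 * b * u.re ≤ 2 * b * r := by gcongr
    have h6 : b ^ 2 * r ^ 2 ≤ b ^ 2 * d * r := by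
      have : b ^ 2 * r * r ≤ b ^ 2 * r * d := by gcongr
      nlinarith
    nlinarith
  have hy2 : y ^ 2 ≤ (2 * b + b ^ 2 * d) ^ 2 * r ^ 2 := by
    rw [← mul_pow]; gcongr
  have hb2 : 0 ≤ b ^ 2 * r ^ 2 := by positivity
  rw [hlog, abs_le]
  constructor <;> nlinarith [sq_nonneg y]

lemma aux_norm_ge (s : ℂ) (x : ℝ) (hs : 0 ≤ s.re) (hx : 0 ≤ x) :
    ‖s‖ ≤ ‖s + x‖ ∧ (‖s‖ + x) ^ 2 ≤ 2 * ‖s + x‖ ^ 2 := by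
  have h : ‖s + x‖ ^ 2 = ‖s‖ ^ 2 + 2 * s.re * x + x ^ 2 := by
    rw [← Complex.normSq_eq_norm_sq, ← Complex.normSq_eq_norm_sq, Complex.normSq_apply, Complex.normSq_apply]
    simp
    ring
  have : 0 ≤ s.re * x := by positivity
  constructor
  · apply le_of_sq_le_sq _ (norm_nonneg _)
    rw [h]; nlinarith
  · rw [h]; nlinarith [sq_nonneg (‖s‖ - x)]

lemma aux_sum (c : ℝ) (hc : 0 < c) (s : ℂ) (hs : c ≤ s.re) (n : ℕ) :
    ∑ j ∈ Finset.range n, 1 / ‖s + (j:ℝ)‖ ^ 2 ≤ 2 * (1 + 1 / c) * (1 / ‖s‖ - 1 / (‖s‖ + n)) := by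
  have hA : c ≤ ‖s‖ := hs.trans (Complex.re_le_norm s)
  set A := ‖s‖
  induction n with
  | zero => simp
  | succ n ih =>
    rw [Finset.sum_range_succ]
    have h := (aux_norm_ge s n (hc.le.trans hs) (by positivity)).2
    have hA0 : 0 < A := hc.trans_le hA
    have hAn : 0 < A + n := by positivity
    have hAn1 : 0 < A + (n + 1) := by positivity
    have hpos : 0 < ‖s + (n:ℝ)‖ ^ 2 := by
      have : 0 < (A + n) ^ 2 := by positivity
      linarith
    have h1 : 1 / ‖s + (n:ℝ)‖ ^ 2 ≤ 2 / (A + n) ^ 2 := by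
      rw [div_le_div_iff₀ hpos (by positivity)]; linarith
    have h2 : 2 / (A + n) ^ 2 ≤ 2 * (1 + 1 / c) * (1 / (A + n) - 1 / (A + (n + 1))) := by
      have : 2 * (1 + 1 / c) * (1 / (A + n) - 1 / (A + (n + 1))) = 2 * (1 + 1 / c) / ((A + n) * (A + (n + 1))) := by
        field_simp; ring
      rw [this, div_le_div_iff₀ (by positivity) (by positivity)]
      have h3 : A + (n + 1) ≤ (1 + 1 / c) * (A + n) := by
        have : 1 ≤ 1 / c * (A + n) := by
          rw [one_div, inv_mul_eq_div, le_div_iff₀ hc]; have : (0:ℝ) ≤ n := by positivity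
          linarith
        linarith
      nlinarith
    push_cast
    push_cast at ih h1 h2
    have := add_le_add ih (h1.trans h2)
    linarith

lemma aux_sum' (c : ℝ) (hc : 0 < c) (s : ℂ) (hs : c ≤ s.re) (n : ℕ) :
    ∑ j ∈ Finset.range n, 1 / ‖s + (j:ℝ)‖ ^ 2 ≤ 2 * (1 + 1 / c) / ‖s‖ := by
  have hA : c ≤ ‖s‖ := hs.trans (Complex.re_le_norm s)
  refine (aux_sum c hc s hs n).trans ?_
  rw [div_eq_mul_one_div (2 * (1 + 1 / c))]
  gcongr
  have : 0 ≤ 1 / (‖s‖ + n) := by positivity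
  linarith


noncomputable def Pf (a b : Fin p → ℝ) (z : ℂ) : ℂ := ∏ k, (z + b k) / (z + a k)

lemma aux_factor (a b : Fin p → ℝ) (ha : ∀ k, 0 ≤ a k) (hb : ∀ k, 0 ≤ b k) (hμ : 0 < ∑ k, (b k - a k))
    (c : ℝ) (hc : 0 < c) : ∃ K : ℝ, 0 ≤ K ∧ ∀ z : ℂ, c ≤ z.re →
      ‖Pf a b z‖ ≤ (‖z + 1‖ / ‖z‖) ^ (∑ k, (b k - a k)) * Real.exp (K * (1 / ‖z‖ ^ 2)) := by
  choose Ka hKa0 hKa using fun k => aux_log (a k) (1 / c) (ha k) (by positivity)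
  choose Kb hKb0 hKb using fun k => aux_log (b k) (1 / c) (hb k) (by positivity)
  obtain ⟨K1, hK10, hK1⟩ := aux_log 1 (1 / c) (by norm_num) (by positivity)
  set μ := ∑ k, (b k - a k) with hμd
  refine ⟨∑ k, (Ka k + Kb k) + μ * K1, by
    have : 0 ≤ ∑ k, (Ka k + Kb k) := Finset.sum_nonneg fun k _ => add_nonneg (hKa0 k) (hKb0 k)
    positivity, ?_⟩
  intro z hz
  have hz0 : z ≠ 0 := by rintro rfl; simp at hz; linarith
  have hzn : c ≤ ‖z‖ := hz.trans (Complex.re_le_norm z)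
  have hu1 : 0 ≤ (1 / z).re := by
    simp [Complex.inv_re]; exact div_nonneg (hc.le.trans hz) (Complex.normSq_nonneg _)
  have hu2 : ‖1 / z‖ ≤ 1 / c := by
    rw [norm_div, norm_one]; gcongr
  have hu3 : ‖1 / z‖ ^ 2 = 1 / ‖z‖ ^ 2 := by rw [norm_div, norm_one, div_pow, one_pow]
  have hne : ∀ x : ℝ, 0 ≤ x → z + x ≠ 0 := by
    intro x hx h
    have := congrArg Complex.re h
    simp at this; linarith
  have hpos : ∀ x : ℝ, 0 ≤ x → 0 < ‖1 + (x:ℂ) * (1 / z)‖ := by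
    intro x hx
    rw [norm_pos_iff]
    have : 1 + (x:ℂ) * (1 / z) = (z + x) / z := by field_simp
    rw [this]; exact div_ne_zero (hne x hx) hz0
  have hPn : ‖Pf a b z‖ = ∏ k, ‖1 + (b k:ℂ) * (1 / z)‖ / ‖1 + (a k:ℂ) * (1 / z)‖ := by
    rw [Pf, norm_prod]
    apply Finset.prod_congr rfl
    intro k _
    rw [← norm_div]
    congr 1
    have h1 := hne _ (ha k)
    have h2 : 1 + (a k:ℂ) * (1 / z) = (z + a k) / z := by field_simp
    have h3 : 1 + (b k:ℂ) * (1 / z) = (z + b k) / z := by field_simp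
    rw [h2, h3]; field_simp
  have hlogP : Real.log ‖Pf a b z‖ ≤ μ * (1 / z).re + (∑ k, (Ka k + Kb k)) * ‖1 / z‖ ^ 2 := by
    rw [hPn, Real.log_prod (fun k _ => (div_pos (hpos _ (hb k)) (hpos _ (ha k))).ne'), hμd, Finset.sum_mul,
      Finset.sum_mul, ← Finset.sum_add_distrib]
    apply Finset.sum_le_sum
    intro k _
    rw [Real.log_div (hpos _ (hb k)).ne' (hpos _ (ha k)).ne']
    have h1 := abs_le.1 (hKa k (1 / z) hu1 hu2)
    have h2 := abs_le.1 (hKb k (1 / z) hu1 hu2)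
    nlinarith [h1.1, h2.2]
  have hlog1 : Real.log (‖z + 1‖ / ‖z‖) ≥ (1 / z).re - K1 * ‖1 / z‖ ^ 2 := by
    have h1 := abs_le.1 (hK1 (1 / z) hu1 hu2)
    have : ‖1 + ((1:ℝ):ℂ) * (1 / z)‖ = ‖z + 1‖ / ‖z‖ := by
      rw [← norm_div]; congr 1; push_cast; field_simp
    rw [this] at h1
    linarith [h1.1]
  have hz1 : 0 < ‖z + 1‖ / ‖z‖ := by
    apply div_pos _ (norm_pos_iff.2 hz0)
    rw [norm_pos_iff]; simpa using hne 1 zero_le_one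
  have hPpos : 0 < ‖Pf a b z‖ := by
    rw [hPn]; exact Finset.prod_pos (fun k _ => (div_pos (hpos _ (hb k)) (hpos _ (ha k))))
  rw [← Real.log_le_log_iff hPpos (by positivity), Real.log_mul (by positivity) (by positivity), Real.log_exp,
    Real.log_rpow hz1, ← hu3]
  have := mul_le_mul_of_nonneg_left hlog1 hμ.le
  nlinarith

lemma aux_prod (a b : Fin p → ℝ) (ha : ∀ k, 0 ≤ a k) (hb : ∀ k, 0 ≤ b k) (hμ : 0 < ∑ k, (b k - a k))
    (c : ℝ) (hc : 0 < c) : ∃ C : ℝ, 0 < C ∧ ∀ s : ℂ, c ≤ s.re → ∀ n : ℕ,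
      ‖∏ j ∈ Finset.range n, Pf a b (s + (j:ℝ))‖ ≤ C * (‖s + (n:ℝ)‖ / ‖s‖) ^ (∑ k, (b k - a k)) := by
  obtain ⟨K, hK0, hK⟩ := aux_factor a b ha hb hμ c hc
  set μ := ∑ k, (b k - a k) with hμd
  refine ⟨Real.exp (K * (2 * (1 + 1 / c) / c)), Real.exp_pos _, ?_⟩
  intro s hs n
  have hA : c ≤ ‖s‖ := hs.trans (Complex.re_le_norm s)
  have key : ‖∏ j ∈ Finset.range n, Pf a b (s + (j:ℝ))‖ ≤
      (‖s + (n:ℝ)‖ / ‖s‖) ^ μ * Real.exp (K * ∑ j ∈ Finset.range n, 1 / ‖s + (j:ℝ)‖ ^ 2) := by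
    induction n with
    | zero =>
      have : ‖s‖ / ‖s‖ = 1 := div_self (by linarith)
      simp [this]
    | succ n ih =>
      rw [Finset.prod_range_succ, Finset.sum_range_succ, norm_mul]
      have hre : c ≤ (s + (n:ℝ)).re := by simp; have : (0:ℝ) ≤ n := by positivity
                                          linarith
      have h := hK (s + (n:ℝ)) hre
      have hn0 : 0 < ‖s + (n:ℝ)‖ := by linarith [hre.trans (Complex.re_le_norm _)]
      refine (mul_le_mul ih h (norm_nonneg _) (by positivity)).trans (le_of_eq ?_)
      rw [mul_add, Real.exp_add, mul_mul_mul_comm, ← Real.mul_rpow (by positivity) (by positivity)]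
      congr 2
      have : s + (((n + 1 : ℕ):ℝ):ℂ) = s + (n:ℝ) + 1 := by push_cast; ring
      rw [this]
      field_simp
  refine key.trans ?_
  rw [mul_comm]
  gcongr
  refine (aux_sum' c hc s hs n).trans ?_
  gcongr

end

section
variable {p : ℕ}

noncomputable def Ff (a b : Fin p → ℝ) (s : ℂ) : ℂ :=
  (∏ k, Complex.Gamma ((a k : ℂ) + s)) / (∏ k, Complex.Gamma ((b k : ℂ) + s))

noncomputable def Pn (a b : Fin p → ℝ) (n : ℕ) (s : ℂ) : ℂ :=
  (((n:ℝ) ^ (-(∑ k, (b k - a k))) : ℝ) : ℂ) * ∏ j ∈ Finset.range (n + 1), Pf a b (s + (j:ℝ))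

lemma Pn_tendsto (a b : Fin p → ℝ) (ha : ∀ k, 0 ≤ a k) (hb : ∀ k, 0 ≤ b k) (s : ℂ) (hs : 0 < s.re) :
    Tendsto (fun n => Pn a b n s) atTop (nhds (Ff a b s)) := by
  have h1 : Tendsto (fun n => (∏ k, Complex.GammaSeq ((a k : ℂ) + s) n) / (∏ k, Complex.GammaSeq ((b k : ℂ) + s) n))
      atTop (nhds (Ff a b s)) := by
    apply Tendsto.div
    · exact tendsto_finsetProd _ fun k _ => Complex.GammaSeq_tendsto_Gamma _
    · exact tendsto_finsetProd _ fun k _ => Complex.GammaSeq_tendsto_Gamma _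
    · apply Finset.prod_ne_zero_iff.2
      intro k _
      apply Complex.Gamma_ne_zero_of_re_pos
      simp; linarith [hb k]
  refine h1.congr' ?_
  filter_upwards [eventually_gt_atTop 0] with n hn
  have hnC : (n:ℂ) ≠ 0 := by exact_mod_cast hn.ne'
  have hnR : (0:ℝ) < n := by exact_mod_cast hn
  rw [← Finset.prod_div_distrib, Pn]
  have h2 : (((n:ℝ) ^ (-(∑ k, (b k - a k))) : ℝ) : ℂ) = ∏ k, ((n:ℂ) ^ ((a k : ℂ) + s) / (n:ℂ) ^ ((b k : ℂ) + s)) := by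
    rw [← Finset.sum_neg_distrib, Real.rpow_sum_of_pos hnR]
    push_cast
    apply Finset.prod_congr rfl
    intro k _
    rw [← Complex.cpow_sub _ _ hnC, Complex.ofReal_cpow hnR.le]
    push_cast
    congr 1; ring
  have h3 : ∏ j ∈ Finset.range (n + 1), Pf a b (s + (j:ℝ)) =
      ∏ k, ∏ j ∈ Finset.range (n + 1), ((b k + s + j : ℂ) / (a k + s + j)) := by
    simp only [Pf]
    rw [Finset.prod_comm]
    apply Finset.prod_congr rfl; intro k _
    apply Finset.prod_congr rfl; intro j _
    push_cast
    congr 1 <;> ring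
  rw [h2, h3, ← Finset.prod_mul_distrib]
  apply Finset.prod_congr rfl; intro k _
  rw [Complex.GammaSeq, Complex.GammaSeq, Finset.prod_div_distrib]
  have hne : ∀ x : ℝ, 0 ≤ x → ∏ j ∈ Finset.range (n + 1), ((x:ℂ) + s + j) ≠ 0 := by
    intro x hx
    apply Finset.prod_ne_zero_iff.2
    intro j _ h
    have := congrArg Complex.re h
    simp at this
    have : (0:ℝ) ≤ j := by positivity
    linarith
  have h4 := hne _ (ha k)
  have h5 := hne _ (hb k)
  have h6 : (n:ℂ) ^ ((a k : ℂ) + s) ≠ 0 := by simp [Complex.cpow_eq_zero_iff, hnC]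
  have h7 : (n:ℂ) ^ ((b k : ℂ) + s) ≠ 0 := by simp [Complex.cpow_eq_zero_iff, hnC]
  have h8 : (n.factorial : ℂ) ≠ 0 := by exact_mod_cast n.factorial_ne_zero
  field_simp

lemma Pn_bound (a b : Fin p → ℝ) (ha : ∀ k, 0 ≤ a k) (hb : ∀ k, 0 ≤ b k) (hμ : 0 < ∑ k, (b k - a k))
    (c : ℝ) (hc : 0 < c) : ∃ C : ℝ, 0 < C ∧ ∀ s : ℂ, c ≤ s.re → ∀ n : ℕ, 0 < n →
      ‖Pn a b n s‖ ≤ C * ((‖s‖ + 1) / n + 1) ^ (∑ k, (b k - a k)) * ‖s‖ ^ (-(∑ k, (b k - a k))) := by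
  obtain ⟨C, hC, h⟩ := aux_prod a b ha hb hμ c hc
  set μ := ∑ k, (b k - a k) with hμd
  refine ⟨C, hC, fun s hs n hn => ?_⟩
  have hA : c ≤ ‖s‖ := hs.trans (Complex.re_le_norm s)
  have hA0 : 0 < ‖s‖ := by linarith
  have hnR : (0:ℝ) < n := by exact_mod_cast hn
  rw [Pn, norm_mul, Complex.norm_real, Real.norm_of_nonneg (by positivity)]
  calc _ ≤ (n:ℝ) ^ (-μ) * (C * (‖s + ((n + 1 : ℕ):ℝ)‖ / ‖s‖) ^ μ) := by
        gcongr; exact h s hs (n + 1)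
    _ ≤ (n:ℝ) ^ (-μ) * (C * ((‖s‖ + (n + 1)) / ‖s‖) ^ μ) := by
        gcongr
        refine (norm_add_le _ _).trans ?_
        rw [Complex.norm_real, Real.norm_of_nonneg (by positivity)]; push_cast; rfl
    _ = _ := by
        rw [Real.rpow_neg hnR.le, Real.rpow_neg hA0.le, Real.div_rpow (by positivity) hA0.le]
        have : (‖s‖ + 1) / n + 1 = (‖s‖ + (n + 1)) / n := by field_simp; ring
        rw [this, Real.div_rpow (by positivity) hnR.le]
        field_simp

lemma Ff_bound (a b : Fin p → ℝ) (ha : ∀ k, 0 ≤ a k) (hb : ∀ k, 0 ≤ b k) (hμ : 0 < ∑ k, (b k - a k))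
    (c : ℝ) (hc : 0 < c) : ∃ C : ℝ, 0 < C ∧ ∀ s : ℂ, c ≤ s.re →
      ‖Ff a b s‖ ≤ C * ‖s‖ ^ (-(∑ k, (b k - a k))) := by
  obtain ⟨C, hC, h⟩ := Pn_bound a b ha hb hμ c hc
  refine ⟨C, hC, fun s hs => ?_⟩
  have h1 := (Pn_tendsto a b ha hb s (by linarith)).norm
  have h2 : Tendsto (fun n : ℕ => C * ((‖s‖ + 1) / n + 1) ^ (∑ k, (b k - a k)) * ‖s‖ ^ (-(∑ k, (b k - a k)))) atTop
      (nhds (C * (0 + 1) ^ (∑ k, (b k - a k)) * ‖s‖ ^ (-(∑ k, (b k - a k))))) := by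
    apply Tendsto.mul_const
    apply Tendsto.const_mul
    apply Tendsto.rpow_const
    · exact (tendsto_const_div_atTop_nhds_zero_nat _).add_const 1
    · right; exact hμ.le
  simp only [zero_add, Real.one_rpow, mul_one] at h2
  refine le_of_tendsto_of_tendsto h1 h2 ?_
  filter_upwards [eventually_gt_atTop 0] with n hn using h s hs n hn

lemma hasDerivAt_prod_log {ι : Type*} (S : Finset ι) (f : ι → ℂ → ℂ) (g : ι → ℂ) (s : ℂ)
    (h : ∀ i ∈ S, HasDerivAt (f i) (g i * f i s) s) :
    HasDerivAt (fun z => ∏ i ∈ S, f i z) ((∑ i ∈ S, g i) * ∏ i ∈ S, f i s) s := by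
  classical
  induction S using Finset.induction_on with
  | empty => simpa using hasDerivAt_const s (1:ℂ)
  | insert i S hi ih =>
    simp only [Finset.prod_insert hi, Finset.sum_insert hi]
    have h1 := (h i (Finset.mem_insert_self _ _)).mul (ih fun j hj => h j (Finset.mem_insert_of_mem hj))
    exact h1.congr_deriv (by ring)

noncomputable def Qn (a b : Fin p → ℝ) (n : ℕ) (s : ℂ) : ℂ :=
  ∑ j ∈ Finset.range n, ∑ k, (1 / (s + (j:ℝ) + a k) - 1 / (s + (j:ℝ) + b k))

lemma Pf_deriv (a b : Fin p → ℝ) (ha : ∀ k, 0 ≤ a k) (hb : ∀ k, 0 ≤ b k) (z : ℂ) (hz : 0 < z.re) :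
    HasDerivAt (Pf a b) (-(∑ k, (1 / (z + a k) - 1 / (z + b k))) * Pf a b z) z := by
  have hne : ∀ x : ℝ, 0 ≤ x → z + x ≠ 0 := by
    intro x hx h
    have := congrArg Complex.re h
    simp at this; linarith
  have := hasDerivAt_prod_log Finset.univ (fun k (z:ℂ) => (z + b k) / (z + a k))
    (fun k => -(1 / (z + a k) - 1 / (z + b k))) z (by
      intro k _
      have h1 := ((hasDerivAt_id z).add_const (b k : ℂ)).div ((hasDerivAt_id z).add_const (a k : ℂ)) (hne _ (ha k))
      have h4 := hne _ (ha k)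
      have h5 := hne _ (hb k)
      refine h1.congr_deriv ?_
      simp only [id]
      field_simp
      ring)
  rw [Finset.sum_neg_distrib] at this
  exact this

lemma Pn_deriv (a b : Fin p → ℝ) (ha : ∀ k, 0 ≤ a k) (hb : ∀ k, 0 ≤ b k) (n : ℕ) (s : ℂ) (hs : 0 < s.re) :
    HasDerivAt (Pn a b n) (-(Qn a b (n + 1) s) * Pn a b n s) s := by
  have := hasDerivAt_prod_log (Finset.range (n + 1)) (fun j (z:ℂ) => Pf a b (z + (j:ℝ)))
    (fun j => -(∑ k, (1 / (s + (j:ℝ) + a k) - 1 / (s + (j:ℝ) + b k)))) s (by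
      intro j _
      have h1 := Pf_deriv a b ha hb (s + (j:ℝ)) (by simp; positivity)
      exact h1.comp_add_const s ((j:ℝ):ℂ))
  have h2 := this.const_mul (((n:ℝ) ^ (-(∑ k, (b k - a k))) : ℝ) : ℂ)
  rw [Finset.sum_neg_distrib] at h2
  exact h2.congr_deriv (by rw [Qn, Pn]; ring)

lemma Qn_bound (a b : Fin p → ℝ) (ha : ∀ k, 0 ≤ a k) (hb : ∀ k, 0 ≤ b k)
    (c : ℝ) (hc : 0 < c) : ∃ K : ℝ, 0 ≤ K ∧ ∀ s : ℂ, c ≤ s.re → ∀ n : ℕ, ‖Qn a b n s‖ ≤ K / ‖s‖ := by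
  refine ⟨(∑ k, |b k - a k|) * (2 * (1 + 1 / c)), by positivity, fun s hs n => ?_⟩
  have h1 : ‖Qn a b n s‖ ≤ ∑ j ∈ Finset.range n, (∑ k, |b k - a k|) * (1 / ‖s + (j:ℝ)‖ ^ 2) := by
    refine norm_sum_le_of_le _ fun j _ => ?_
    rw [Finset.sum_mul]
    refine norm_sum_le_of_le _ fun k _ => ?_
    set z := s + (j:ℝ) with hz
    have hzr : 0 < z.re := by
      have : (0:ℝ) ≤ j := by positivity
      simp [hz]; linarith
    have hne : ∀ x : ℝ, 0 ≤ x → z + x ≠ 0 := by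
      intro x hx h
      have := congrArg Complex.re h
      simp at this; linarith
    have h4 := hne _ (ha k)
    have h5 := hne _ (hb k)
    have hz0 : 0 < ‖z‖ := hzr.trans_le (Complex.re_le_norm z)
    have : 1 / (z + a k) - 1 / (z + b k) = ((b k - a k : ℝ) : ℂ) / ((z + a k) * (z + b k)) := by
      push_cast; field_simp; ring
    rw [this, norm_div, Complex.norm_real, Real.norm_eq_abs, mul_one_div, norm_mul, sq]
    have h6 := (aux_norm_ge z (a k) hzr.le (ha k)).1
    have h7 := (aux_norm_ge z (b k) hzr.le (hb k)).1
    gcongr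
  refine h1.trans ?_
  rw [← Finset.mul_sum, mul_div_assoc]
  gcongr
  exact aux_sum' c hc s hs n


end

section
variable {p : ℕ}

noncomputable def phi (a b : Fin p → ℝ) (v : ℝ) : ℝ :=
  (∑ k, (Real.exp (-(a k * v)) - Real.exp (-(b k * v)))) / (1 - Real.exp (-v))

noncomputable def Qf (a b : Fin p → ℝ) (s : ℂ) : ℂ :=
  ∫ v in Set.Ioi (0:ℝ), (phi a b v : ℂ) * Complex.exp (-(s * v))

lemma exp_diff_le (x y : ℝ) (hx : 0 ≤ x) (hy : 0 ≤ y) : |Real.exp (-x) - Real.exp (-y)| ≤ |y - x| := by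
  have key : ∀ x y : ℝ, 0 ≤ x → x ≤ y → Real.exp (-x) - Real.exp (-y) ≤ y - x := by
    intro x y hx hxy
    have h1 : Real.exp (-y) = Real.exp (-x) * Real.exp (-(y - x)) := by rw [← Real.exp_add]; ring_nf
    have h2 := Real.add_one_le_exp (-(y - x))
    have h3 : Real.exp (-x) ≤ 1 := Real.exp_le_one_iff.2 (by linarith)
    have h4 := Real.exp_pos (-x)
    rw [h1]
    nlinarith
  rcases le_total x y with h | h
  · rw [abs_of_nonneg (a := y - x) (by linarith), abs_of_nonneg (by have := Real.exp_le_exp.2 (neg_le_neg h); linarith)]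
    exact key x y hx h
  · rw [abs_of_nonpos (a := y - x) (by linarith), abs_of_nonpos (by have := Real.exp_le_exp.2 (neg_le_neg h); linarith)]
    linarith [key y x hy h]

lemma phi_bound (a b : Fin p → ℝ) (ha : ∀ k, 0 ≤ a k) (hb : ∀ k, 0 ≤ b k) (v : ℝ) (hv : 0 < v) :
    |phi a b v| ≤ (∑ k, |b k - a k|) * (1 + v) := by
  have h1 : |∑ k, (Real.exp (-(a k * v)) - Real.exp (-(b k * v)))| ≤ (∑ k, |b k - a k|) * v := by
    rw [Finset.sum_mul]
    refine (Finset.abs_sum_le_sum_abs _ _).trans (Finset.sum_le_sum fun k _ => ?_)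
    refine (exp_diff_le _ _ (mul_nonneg (ha k) hv.le) (mul_nonneg (hb k) hv.le)).trans (le_of_eq ?_)
    rw [← sub_mul, abs_mul, abs_of_pos hv]
  have h2 : v / (1 + v) ≤ 1 - Real.exp (-v) := by
    have h3 : Real.exp (-v) ≤ 1 / (1 + v) := by
      rw [Real.exp_neg, ← one_div]
      apply one_div_le_one_div_of_le (by linarith)
      linarith [Real.add_one_le_exp v]
    have : v / (1 + v) = 1 - 1 / (1 + v) := by field_simp; ring
    linarith
  have h3 : 0 < v / (1 + v) := by positivity
  rw [phi, abs_div, abs_of_pos (h3.trans_le h2)]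
  rw [div_le_iff₀ (h3.trans_le h2)]
  refine h1.trans ?_
  have h4 : v ≤ (1 + v) * (1 - Real.exp (-v)) := by
    rw [div_le_iff₀ (by linarith)] at h2; linarith
  rw [mul_assoc]
  gcongr

lemma phi_bound' (a b : Fin p → ℝ) (ha : ∀ k, 0 ≤ a k) (hb : ∀ k, 0 ≤ b k) (c : ℝ) (hc : 0 < c) :
    ∃ B : ℝ, 0 ≤ B ∧ ∀ v, 0 < v → |phi a b v| ≤ B * Real.exp (c / 2 * v) := by
  refine ⟨(∑ k, |b k - a k|) * (1 + 2 / c), by positivity, fun v hv => ?_⟩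
  refine (phi_bound a b ha hb v hv).trans ?_
  rw [mul_assoc]
  gcongr
  have h1 := Real.add_one_le_exp (c / 2 * v)
  have h2 : 0 < c / 2 * v := by positivity
  have h3 : v = 2 / c * (c / 2 * v) := by field_simp
  have h4 : 2 / c * (c / 2 * v) ≤ 2 / c * Real.exp (c / 2 * v) := by gcongr; linarith
  linarith

lemma phi_meas (a b : Fin p → ℝ) : Measurable (phi a b) := by
  unfold phi; fun_prop

lemma norm_integrand (a b : Fin p → ℝ) (s : ℂ) (v : ℝ) :
    ‖(phi a b v : ℂ) * Complex.exp (-(s * v))‖ = |phi a b v| * Real.exp (-(s.re * v)) := by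
  rw [norm_mul, Complex.norm_exp, Complex.norm_real, Real.norm_eq_abs]
  simp

lemma integrand_bound (a b : Fin p → ℝ) (ha : ∀ k, 0 ≤ a k) (hb : ∀ k, 0 ≤ b k) (c : ℝ) (hc : 0 < c) :
    ∃ B : ℝ, 0 ≤ B ∧ ∀ s : ℂ, c ≤ s.re → ∀ v, 0 < v → ‖(phi a b v : ℂ) * Complex.exp (-(s * v))‖ ≤ B * Real.exp (-(c / 2) * v) := by
  obtain ⟨B, hB, h⟩ := phi_bound' a b ha hb c hc
  refine ⟨B, hB, fun s hs v hv => ?_⟩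
  rw [norm_integrand]
  calc _ ≤ B * Real.exp (c / 2 * v) * Real.exp (-(c * v)) := by
        gcongr
        exact h v hv
    _ = _ := by rw [mul_assoc, ← Real.exp_add]; ring_nf

lemma bound_integrable (B c : ℝ) (hc : 0 < c) :
    Integrable (fun v => B * Real.exp (-(c / 2) * v)) (volume.restrict (Set.Ioi (0:ℝ))) :=
  (integrableOn_exp_mul_Ioi (by linarith : -(c / 2) < 0) 0).const_mul B

lemma Qn_eq (a b : Fin p → ℝ) (ha : ∀ k, 0 ≤ a k) (hb : ∀ k, 0 ≤ b k) (s : ℂ) (hs : 0 < s.re) (n : ℕ) :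
    Qn a b n s = ∫ v in Set.Ioi (0:ℝ), (phi a b v : ℂ) * Complex.exp (-(s * v)) * ((1 - Real.exp (-(n * v)) : ℝ) : ℂ) := by
  have hI : ∀ z : ℂ, 0 < z.re → IntegrableOn (fun v : ℝ => Complex.exp (-z * v)) (Set.Ioi 0) ∧
      1 / z = ∫ v in Set.Ioi (0:ℝ), Complex.exp (-z * v) := by
    intro z hz
    have h : (-z).re < 0 := by simpa using hz
    refine ⟨integrableOn_exp_mul_complex_Ioi h 0, ?_⟩
    rw [integral_exp_mul_complex_Ioi h]; simp
  have hre : ∀ (j : ℕ) (x : ℝ), 0 ≤ x → 0 < (s + (j:ℝ) + x).re := by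
    intro j x hx; simp; positivity
  have h1 : Qn a b n s = ∫ v in Set.Ioi (0:ℝ), ∑ j ∈ Finset.range n, ∑ k,
      (Complex.exp (-(s + (j:ℝ) + a k) * v) - Complex.exp (-(s + (j:ℝ) + b k) * v)) := by
    rw [integral_finsetSum]
    · rw [Qn]
      apply Finset.sum_congr rfl; intro j _
      rw [integral_finsetSum]
      · apply Finset.sum_congr rfl; intro k _
        rw [integral_sub (hI _ (hre j _ (ha k))).1 (hI _ (hre j _ (hb k))).1,
          (hI _ (hre j _ (ha k))).2, (hI _ (hre j _ (hb k))).2]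
      · intro k _
        exact (hI _ (hre j _ (ha k))).1.sub (hI _ (hre j _ (hb k))).1
    · intro j _
      apply integrable_finsetSum
      intro k _
      exact (hI _ (hre j _ (ha k))).1.sub (hI _ (hre j _ (hb k))).1
  rw [h1]
  apply setIntegral_congr_fun measurableSet_Ioi
  intro v hv
  have hv : 0 < v := hv
  have hne : Complex.exp (-(v:ℂ)) ≠ 1 := by
    have : Real.exp (-v) < 1 := by rw [← Real.exp_zero]; exact Real.exp_lt_exp.2 (by linarith)
    intro h
    have h' : ((Real.exp (-v) : ℝ) : ℂ) = ((1:ℝ):ℂ) := by push_cast; exact h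
    have := Complex.ofReal_injective h'
    linarith
  have hne' : 1 - Complex.exp (-(v:ℂ)) ≠ 0 := sub_ne_zero.2 hne.symm
  have hgeo : ∑ j ∈ Finset.range n, Complex.exp (-(v:ℂ)) ^ j = (1 - Complex.exp (-(n * v:ℂ))) / (1 - Complex.exp (-(v:ℂ))) := by
    rw [geom_sum_eq hne, ← Complex.exp_nat_mul, ← neg_div_neg_eq]
    congr 1 <;> ring_nf
  have h2 : ∀ j ∈ Finset.range n, ∑ k, (Complex.exp (-(s + (j:ℝ) + a k) * v) - Complex.exp (-(s + (j:ℝ) + b k) * v))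
      = (∑ k, (Complex.exp (-(a k * v)) - Complex.exp (-(b k * v)))) * Complex.exp (-(s * v)) * Complex.exp (-(v:ℂ)) ^ j := by
    intro j _
    rw [Finset.sum_mul, Finset.sum_mul]
    apply Finset.sum_congr rfl; intro k _
    rw [← Complex.exp_nat_mul, sub_mul, sub_mul, ← Complex.exp_add, ← Complex.exp_add, ← Complex.exp_add, ← Complex.exp_add]
    push_cast
    congr 2 <;> ring
  simp only []
  rw [Finset.sum_congr rfl h2, ← Finset.mul_sum, hgeo, phi]
  push_cast
  ring

lemma meas_integrand (a b : Fin p → ℝ) (s : ℂ) : Measurable (fun v : ℝ => (phi a b v : ℂ) * Complex.exp (-(s * v))) := by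
  have := phi_meas a b
  fun_prop

lemma Qn_tendsto (a b : Fin p → ℝ) (ha : ∀ k, 0 ≤ a k) (hb : ∀ k, 0 ≤ b k) (s : ℂ) (hs : 0 < s.re) :
    Tendsto (fun n => Qn a b n s) atTop (nhds (Qf a b s)) := by
  obtain ⟨B, hB, h⟩ := integrand_bound a b ha hb s.re hs
  simp only [Qn_eq a b ha hb s hs]
  rw [Qf]
  apply tendsto_integral_of_dominated_convergence (fun v => B * Real.exp (-(s.re / 2) * v))
  · intro n
    apply Measurable.aestronglyMeasurable
    apply (meas_integrand a b s).mul
    fun_prop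
  · exact bound_integrable B s.re hs
  · intro n
    filter_upwards [ae_restrict_mem measurableSet_Ioi] with v hv
    have hv : 0 < v := hv
    rw [norm_mul]
    refine (mul_le_of_le_one_right (norm_nonneg _) ?_).trans (h s le_rfl v hv)
    rw [Complex.norm_real, Real.norm_eq_abs, abs_le]
    have h1 : Real.exp (-(n * v)) ≤ 1 := Real.exp_le_one_iff.2 (by have : 0 ≤ n * v := by positivity
                                                                   linarith)
    have := Real.exp_pos (-(n * v))
    constructor <;> linarith
  · filter_upwards [ae_restrict_mem measurableSet_Ioi] with v hv
    have hv : 0 < v := hv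
    have h1 : Tendsto (fun n : ℕ => 1 - Real.exp (-(n * v))) atTop (nhds (1 - 0)) := by
      apply Tendsto.const_sub
      apply Real.tendsto_exp_neg_atTop_nhds_zero.comp
      exact tendsto_natCast_atTop_atTop.atTop_mul_const hv
    have h2 := ((Complex.continuous_ofReal.tendsto _).comp h1).const_mul ((phi a b v : ℂ) * Complex.exp (-(s * v)))
    simpa using h2

lemma Qf_bound (a b : Fin p → ℝ) (ha : ∀ k, 0 ≤ a k) (hb : ∀ k, 0 ≤ b k)
    (c : ℝ) (hc : 0 < c) : ∃ K : ℝ, 0 ≤ K ∧ ∀ s : ℂ, c ≤ s.re → ‖Qf a b s‖ ≤ K / ‖s‖ := by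
  obtain ⟨K, hK, h⟩ := Qn_bound a b ha hb c hc
  exact ⟨K, hK, fun s hs => le_of_tendsto (Qn_tendsto a b ha hb s (by linarith)).norm
    (Eventually.of_forall fun n => h s hs n)⟩

lemma Qf_cont (a b : Fin p → ℝ) (ha : ∀ k, 0 ≤ a k) (hb : ∀ k, 0 ≤ b k) (c : ℝ) (hc : 0 < c) :
    Continuous (fun t : ℝ => Qf a b (c + t * Complex.I)) := by
  obtain ⟨B, hB, h⟩ := integrand_bound a b ha hb c hc
  unfold Qf
  apply continuous_of_dominated (bound := fun v => B * Real.exp (-(c / 2) * v))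
  · intro t
    exact (meas_integrand a b _).aestronglyMeasurable
  · intro t
    filter_upwards [ae_restrict_mem measurableSet_Ioi] with v hv
    exact h _ (by simp) v hv
  · exact bound_integrable B c hc
  · filter_upwards with v
    fun_prop

lemma Ff_diff (a b : Fin p → ℝ) (s : ℂ) (h : ∀ k, 0 < a k + s.re) : DifferentiableAt ℂ (Ff a b) s := by
  have : Ff a b = fun s => (∏ k, Complex.Gamma ((a k : ℂ) + s)) * (∏ k, (Complex.Gamma ((b k : ℂ) + s))⁻¹) := by
    ext s; rw [Ff, div_eq_mul_inv, Finset.prod_inv_distrib]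
  rw [this]
  apply DifferentiableAt.mul
  · apply DifferentiableAt.fun_finsetProd
    intro k _
    have h1 : DifferentiableAt ℂ Complex.Gamma ((a k : ℂ) + s) := by
      apply Complex.differentiableAt_Gamma
      intro m hm
      have := congrArg Complex.re hm
      simp at this
      have h2 := h k
      rw [this] at h2
      have : (0:ℝ) ≤ m := by positivity
      linarith
    exact h1.comp s ((differentiableAt_id).const_add _)
  · apply DifferentiableAt.fun_finsetProd
    intro k _
    exact (Complex.differentiable_one_div_Gamma _).comp s ((differentiableAt_id).const_add (b k : ℂ))

lemma Ff_cont (a b : Fin p → ℝ) (c : ℝ) (hc : ∀ k, 0 < a k + c) :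
    Continuous (fun t : ℝ => Ff a b (c + t * Complex.I)) := by
  rw [continuous_iff_continuousAt]
  intro t
  have h := (Ff_diff a b (c + t * Complex.I) (by simpa using hc)).continuousAt
  exact ContinuousAt.comp (f := fun t : ℝ => (c + t * Complex.I : ℂ)) h (by fun_prop)

lemma line_deriv (f : ℂ → ℂ) (f' : ℂ) (c t : ℝ) (h : HasDerivAt f f' (c + t * Complex.I)) :
    HasDerivAt (fun t : ℝ => f (c + t * Complex.I)) (f' * Complex.I) t := by
  have h1 : HasDerivAt (fun t : ℝ => (c + t * Complex.I : ℂ)) Complex.I t := by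
    simpa using ((Complex.ofRealCLM.hasDerivAt (x := t)).mul_const Complex.I).const_add (c : ℂ)
  exact h.comp t h1

lemma Ff_deriv (a b : Fin p → ℝ) (ha : ∀ k, 0 ≤ a k) (hb : ∀ k, 0 ≤ b k) (hμ : 0 < ∑ k, (b k - a k))
    (c : ℝ) (hc : 0 < c) (t : ℝ) :
    HasDerivAt (fun t : ℝ => Ff a b (c + t * Complex.I))
      (-(Qf a b (c + t * Complex.I) * Ff a b (c + t * Complex.I)) * Complex.I) t := by
  have hre : ∀ t : ℝ, (c + t * Complex.I : ℂ).re = c := by intro t; simp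
  have hcont : Continuous (fun t : ℝ => -(Qf a b (c + t * Complex.I) * Ff a b (c + t * Complex.I)) * Complex.I) :=
    ((Qf_cont a b ha hb c hc).mul (Ff_cont a b c (fun k => by linarith [ha k]))).neg.mul continuous_const
  have hlc : ∀ g : ℂ → ℂ, (∀ z : ℂ, 0 < z.re → DifferentiableAt ℂ g z) → Continuous (fun t : ℝ => g (c + t * Complex.I)) := by
    intro g hg
    rw [continuous_iff_continuousAt]
    intro t
    exact ContinuousAt.comp (f := fun t : ℝ => (c + t * Complex.I : ℂ)) (hg _ (by simpa using hc)).continuousAt (by fun_prop)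
  have hP : ∀ n, Continuous (fun t : ℝ => Pn a b n (c + t * Complex.I)) := fun n =>
    hlc _ fun z hz => (Pn_deriv a b ha hb n z hz).differentiableAt
  have hQ : ∀ n, Continuous (fun t : ℝ => Qn a b n (c + t * Complex.I)) := by
    intro n
    apply hlc
    intro z hz
    have : Qn a b n = fun s : ℂ => ∑ j ∈ Finset.range n, ∑ k, (1 / (s + (j:ℝ) + a k) - 1 / (s + (j:ℝ) + b k)) := rfl
    rw [this]
    apply DifferentiableAt.fun_sum; intro j _
    apply DifferentiableAt.fun_sum; intro k _
    have hne : ∀ x : ℝ, 0 ≤ x → z + (j:ℝ) + x ≠ 0 := by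
      intro x hx h
      have := congrArg Complex.re h
      simp at this
      have : (0:ℝ) ≤ j := by positivity
      linarith
    have h4 := hne _ (ha k)
    have h5 := hne _ (hb k)
    apply DifferentiableAt.sub
    · exact DifferentiableAt.div (by fun_prop) (by fun_prop) h4
    · exact DifferentiableAt.div (by fun_prop) (by fun_prop) h5
  obtain ⟨C, hC, hCb⟩ := Pn_bound a b ha hb hμ c hc
  obtain ⟨K, hK, hKb⟩ := Qn_bound a b ha hb c hc
  have key : ∀ T : ℝ, Ff a b (c + T * Complex.I) - Ff a b (c + (0:ℝ) * Complex.I) =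
      ∫ t in (0:ℝ)..T, -(Qf a b (c + t * Complex.I) * Ff a b (c + t * Complex.I)) * Complex.I := by
    intro T
    have e1 : Tendsto (fun n => Pn a b n (c + T * Complex.I) - Pn a b n (c + (0:ℝ) * Complex.I)) atTop
        (nhds (Ff a b (c + T * Complex.I) - Ff a b (c + (0:ℝ) * Complex.I))) :=
      (Pn_tendsto a b ha hb _ (by rw [hre]; exact hc)).sub (Pn_tendsto a b ha hb _ (by rw [hre]; exact hc))
    have e2 : ∀ n, Pn a b n (c + T * Complex.I) - Pn a b n (c + (0:ℝ) * Complex.I) =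
        ∫ t in (0:ℝ)..T, -(Qn a b (n + 1) (c + t * Complex.I) * Pn a b n (c + t * Complex.I)) * Complex.I := by
      intro n
      symm
      apply intervalIntegral.integral_eq_sub_of_hasDerivAt (f := fun t : ℝ => Pn a b n (c + t * Complex.I))
      · intro t _
        have := line_deriv _ _ c t (Pn_deriv a b ha hb n (c + t * Complex.I) (by rw [hre]; exact hc))
        simpa using this
      · exact (((hQ (n + 1)).mul (hP n)).neg.mul continuous_const).intervalIntegrable _ _
    refine tendsto_nhds_unique e1 ?_
    simp only [e2]
    set μ := ∑ k, (b k - a k) with hμd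
    apply intervalIntegral.tendsto_integral_filter_of_dominated_convergence
      (fun _ => K / c * (C * (c + |T| + 2) ^ μ * c ^ (-μ)))
    · exact Eventually.of_forall fun n => (((hQ (n + 1)).mul (hP n)).neg.mul continuous_const).aestronglyMeasurable
    · filter_upwards [eventually_gt_atTop 0] with n hn
      filter_upwards with t ht
      have htT : |t| ≤ |T| := by
        rcases le_total 0 T with h0 | h0
        · rw [Set.uIoc_of_le h0] at ht
          rw [abs_of_pos ht.1, abs_of_nonneg h0]; exact ht.2
        · rw [Set.uIoc_of_ge h0] at ht
          rw [abs_of_nonpos ht.2, abs_of_nonpos h0]; linarith [ht.1]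
      have hn1 : (1:ℝ) ≤ n := by exact_mod_cast hn
      set s : ℂ := c + t * Complex.I with hs
      have hsc : c ≤ ‖s‖ := by
        have := Complex.re_le_norm s; rwa [hre] at this
      have hsu : ‖s‖ ≤ c + |T| := by
        refine (norm_add_le _ _).trans ?_
        simp [abs_of_pos hc]; exact htT
      have h1 := hCb s (hre t).ge n hn
      have h2 := hKb s (hre t).ge (n + 1)
      rw [norm_mul, Complex.norm_I, mul_one, norm_neg, norm_mul]
      have hs0 : 0 < ‖s‖ := by linarith
      apply mul_le_mul (h2.trans (by gcongr)) _ (norm_nonneg _) (by positivity)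
      refine h1.trans ?_
      have h3 : (‖s‖ + 1) / n + 1 ≤ c + |T| + 2 := by
        have : (‖s‖ + 1) / n ≤ ‖s‖ + 1 := div_le_self (by positivity) hn1
        linarith
      have h4 : ‖s‖ ^ (-μ) ≤ c ^ (-μ) := Real.rpow_le_rpow_of_nonpos hc hsc (by linarith)
      gcongr
    · exact intervalIntegrable_const
    · filter_upwards with t _
      apply Tendsto.mul_const
      apply Tendsto.neg
      exact ((Qn_tendsto a b ha hb _ (by rw [hre]; exact hc)).comp (tendsto_add_atTop_nat 1)).mul
        (Pn_tendsto a b ha hb _ (by rw [hre]; exact hc))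
  have hF : (fun t : ℝ => Ff a b (c + t * Complex.I)) = fun T : ℝ => (∫ t in (0:ℝ)..T, -(Qf a b (c + t * Complex.I) * Ff a b (c + t * Complex.I)) * Complex.I) + Ff a b (c + (0:ℝ) * Complex.I) := by
    ext T; rw [← key]; ring
  rw [hF]
  apply HasDerivAt.add_const
  exact intervalIntegral.integral_hasDerivAt_right (hcont.intervalIntegrable _ _)
    hcont.aestronglyMeasurable.stronglyMeasurableAtFilter hcont.continuousAt

end

section
variable {p : ℕ}

noncomputable def gR (a b : Fin p → ℝ) (c R w : ℝ) : ℂ :=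
  ∫ t in (-R)..R, Ff a b (c + t * Complex.I) * Complex.exp ((c + t * Complex.I) * w)

lemma Ff_rec (a b : Fin p → ℝ) (s : ℂ) (hs : s.im ≠ 0) :
    Ff a b s = Ff a b (s + 1) * ∏ k, ((b k + s) / (a k + s)) := by
  have hne : ∀ x : ℝ, (x:ℂ) + s ≠ 0 := by
    intro x h
    have := congrArg Complex.im h
    simp at this; exact hs this
  have h1 : ∀ x : ℝ, Complex.Gamma (x + (s + 1)) = (x + s) * Complex.Gamma (x + s) := by
    intro x; rw [← add_assoc, Complex.Gamma_add_one _ (hne x)]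
  rw [Ff, Ff]
  simp only [h1]
  rw [Finset.prod_mul_distrib, Finset.prod_mul_distrib, Finset.prod_div_distrib]
  have h2 : ∏ k, ((a k:ℂ) + s) ≠ 0 := Finset.prod_ne_zero_iff.2 fun k _ => hne _
  have h3 : ∏ k, ((b k:ℂ) + s) ≠ 0 := Finset.prod_ne_zero_iff.2 fun k _ => hne _
  have h4 : ∏ k, Complex.Gamma ((b k:ℂ) + s) ≠ 0 := by
    apply Finset.prod_ne_zero_iff.2; intro k _
    apply Complex.Gamma_ne_zero
    intro m h
    have := congrArg Complex.im h
    simp at this; exact hs this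
  field_simp

lemma Ff_bound_im (a b : Fin p → ℝ) (ha : ∀ k, 0 ≤ a k) (hb : ∀ k, 0 ≤ b k) (hμ : 0 < ∑ k, (b k - a k))
    (m : ℕ) : ∃ C : ℝ, 0 < C ∧ ∀ s : ℂ, 1 - (m:ℝ) ≤ s.re → 1 ≤ |s.im| →
      ‖Ff a b s‖ ≤ C * |s.im| ^ (-(∑ k, (b k - a k))) := by
  induction m with
  | zero =>
    obtain ⟨C, hC, h⟩ := Ff_bound a b ha hb hμ 1 one_pos
    refine ⟨C, hC, fun s hs hi => (h s (by simpa using hs)).trans ?_⟩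
    gcongr ?_ * ?_
    exact Real.rpow_le_rpow_of_nonpos (by linarith) (Complex.abs_im_le_norm s) (by linarith)
  | succ m ih =>
    obtain ⟨C, hC, h⟩ := ih
    refine ⟨C * ∏ k, (1 + |b k - a k|), by positivity, fun s hs hi => ?_⟩
    have hs0 : s.im ≠ 0 := by intro h; rw [h] at hi; simp at hi; linarith
    rw [Ff_rec a b s hs0, norm_mul, norm_prod]
    have h1 := h (s + 1) (by push_cast at hs; simp; linarith) (by simpa using hi)
    have h2 : ∏ k, ‖((b k:ℂ) + s) / (a k + s)‖ ≤ ∏ k, (1 + |b k - a k|) := by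
      apply Finset.prod_le_prod (fun _ _ => norm_nonneg _)
      intro k _
      have hn : 1 ≤ ‖(a k:ℂ) + s‖ := by
        refine hi.trans ?_
        simpa using Complex.abs_im_le_norm ((a k:ℂ) + s)
      have h3 : ((b k:ℂ) + s) / (a k + s) = 1 + ((b k - a k : ℝ):ℂ) / (a k + s) := by
        have : (a k:ℂ) + s ≠ 0 := by rw [← norm_pos_iff]; linarith
        push_cast
        field_simp; ring
      rw [h3]
      refine (norm_add_le _ _).trans ?_
      rw [norm_one, norm_div, Complex.norm_real, Real.norm_eq_abs]
      gcongr
      exact div_le_self (abs_nonneg _) hn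
    simp only [Complex.add_im, Complex.one_im, add_zero] at h1
    calc _ ≤ (C * |s.im| ^ (-(∑ k, (b k - a k)))) * ∏ k, (1 + |b k - a k|) := by gcongr
      _ = _ := by ring

lemma rect (a b : Fin p → ℝ) (c σ R w : ℝ) (hcσ : c ≤ σ) (hc : ∀ k, 0 < a k + c) :
    gR a b c R w = gR a b σ R w - Complex.I * ((∫ x in c..σ, Ff a b (x + (-R:ℝ) * Complex.I) * Complex.exp ((x + (-R:ℝ) * Complex.I) * w))
      - ∫ x in c..σ, Ff a b (x + R * Complex.I) * Complex.exp ((x + R * Complex.I) * w)) := by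
  have h := Complex.integral_boundary_rect_eq_zero_of_differentiableOn (fun s => Ff a b s * Complex.exp (s * w))
    ⟨c, -R⟩ ⟨σ, R⟩ (by
      intro s hs
      have h1 : s.re ∈ Set.uIcc c σ := hs.1
      rw [Set.uIcc_of_le hcσ] at h1
      apply DifferentiableAt.differentiableWithinAt
      apply (Ff_diff a b s (fun k => by linarith [hc k, h1.1])).mul
      fun_prop)
  simp only [smul_eq_mul] at h
  rw [gR, gR]
  have hI := Complex.I_mul_I
  linear_combination Complex.I * h - ((∫ t in (-R)..R, Ff a b (σ + t * Complex.I) * Complex.exp ((σ + t * Complex.I) * w)) - ∫ t in (-R)..R, Ff a b (c + t * Complex.I) * Complex.exp ((c + t * Complex.I) * w)) * hI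

lemma norm_cexp_line (x t w : ℝ) : ‖Complex.exp ((x + t * Complex.I) * w)‖ = Real.exp (x * w) := by
  rw [Complex.norm_exp]; simp

lemma gR_vanish (a b : Fin p → ℝ) (ha : ∀ k, 0 ≤ a k) (hb : ∀ k, 0 ≤ b k) (hμ : 0 < ∑ k, (b k - a k))
    (c : ℝ) (hc : 0 < c) (w : ℝ) (hw : w < 0) : Tendsto (fun R => gR a b c R w) atTop (nhds 0) := by
  obtain ⟨C, hC, h⟩ := Ff_bound a b ha hb hμ c hc
  set μ := ∑ k, (b k - a k) with hμd
  have hbd : ∀ R : ℝ, 0 < R → ‖gR a b c R w‖ ≤ 2 * (C * R ^ (-μ)) * (-Real.exp (w * c) / w) := by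
    intro R hR
    have hhor : ∀ (σ r : ℝ), c ≤ σ → |r| = R → ‖∫ x in c..σ, Ff a b (x + r * Complex.I) * Complex.exp ((x + r * Complex.I) * w)‖ ≤ (C * R ^ (-μ)) * (-Real.exp (w * c) / w) := by
      intro σ r hσ hr
      have h1 : ‖∫ x in c..σ, Ff a b (x + r * Complex.I) * Complex.exp ((x + r * Complex.I) * w)‖ ≤ ∫ x in c..σ, (C * R ^ (-μ)) * Real.exp (w * x) := by
        apply intervalIntegral.norm_integral_le_of_norm_le hσ
        · filter_upwards with x hx
          rw [norm_mul, norm_cexp_line, mul_comm w x]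
          gcongr
          refine (h _ (by simpa using hx.1.le)).trans ?_
          gcongr ?_ * ?_
          apply Real.rpow_le_rpow_of_nonpos hR _ (by linarith)
          have := Complex.abs_im_le_norm (x + r * Complex.I)
          simpa [hr] using this
        · apply Continuous.intervalIntegrable; fun_prop
      refine h1.trans ?_
      rw [intervalIntegral.integral_const_mul, intervalIntegral.integral_of_le hσ]
      gcongr
      rw [← integral_exp_mul_Ioi hw c]
      apply setIntegral_mono_set (integrableOn_exp_mul_Ioi hw c)
      · filter_upwards with x using (Real.exp_pos _).le
      · exact Set.Ioc_subset_Ioi_self.eventuallyLE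
    have hver : ∀ σ : ℝ, c ≤ σ → ‖gR a b σ R w‖ ≤ C * c ^ (-μ) * Real.exp (σ * w) * |R - -R| := by
      intro σ hσ
      apply intervalIntegral.norm_integral_le_of_norm_le_const
      intro t _
      rw [norm_mul, norm_cexp_line]
      gcongr
      refine (h _ (by simpa using hσ)).trans ?_
      gcongr ?_ * ?_
      apply Real.rpow_le_rpow_of_nonpos hc _ (by linarith)
      have := Complex.re_le_norm (σ + t * Complex.I)
      simp at this
      linarith
    have hlim : Tendsto (fun σ : ℝ => C * c ^ (-μ) * Real.exp (σ * w) * |R - -R| + 2 * (C * R ^ (-μ)) * (-Real.exp (w * c) / w)) atTop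
        (nhds (C * c ^ (-μ) * 0 * |R - -R| + 2 * (C * R ^ (-μ)) * (-Real.exp (w * c) / w))) := by
      apply Tendsto.add_const
      apply Tendsto.mul_const
      apply Tendsto.const_mul
      apply Real.tendsto_exp_atBot.comp
      exact tendsto_id.atTop_mul_const_of_neg hw
    simp only [mul_zero, zero_mul, zero_add] at hlim
    refine ge_of_tendsto hlim ?_
    filter_upwards [eventually_ge_atTop c] with σ hσ
    rw [rect a b c σ R w hσ (fun k => by linarith [ha k])]
    refine (norm_sub_le _ _).trans ?_
    rw [norm_mul, Complex.norm_I, one_mul]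
    have h1 := hhor σ (-R) hσ (by rw [abs_neg, abs_of_pos hR])
    have h2 := hhor σ R hσ (abs_of_pos hR)
    have h3 := norm_sub_le (∫ x in c..σ, Ff a b (x + (-R:ℝ) * Complex.I) * Complex.exp ((x + (-R:ℝ) * Complex.I) * w)) (∫ x in c..σ, Ff a b (x + R * Complex.I) * Complex.exp ((x + R * Complex.I) * w))
    linarith [hver σ hσ]
  rw [tendsto_zero_iff_norm_tendsto_zero]
  have hlim : Tendsto (fun R : ℝ => 2 * (C * R ^ (-μ)) * (-Real.exp (w * c) / w)) atTop (nhds (2 * (C * 0) * (-Real.exp (w * c) / w))) := by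
    apply Tendsto.mul_const
    apply Tendsto.const_mul
    apply Tendsto.const_mul
    exact tendsto_rpow_neg_atTop hμ
  simp only [mul_zero, zero_mul] at hlim
  refine tendsto_of_tendsto_of_tendsto_of_le_of_le' tendsto_const_nhds hlim (Eventually.of_forall fun _ => norm_nonneg _) ?_
  filter_upwards [eventually_gt_atTop 0] with R hR using hbd R hR

lemma gR_shift (a b : Fin p → ℝ) (ha : ∀ k, 0 ≤ a k) (hb : ∀ k, 0 ≤ b k) (hμ : 0 < ∑ k, (b k - a k))
    (c σ : ℝ) (hcσ : c ≤ σ) (hc : ∀ k, 0 < a k + c) (w : ℝ) (L : ℂ)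
    (hL : Tendsto (fun R => gR a b c R w) atTop (nhds L)) : Tendsto (fun R => gR a b σ R w) atTop (nhds L) := by
  obtain ⟨m, hm⟩ := exists_nat_ge (1 - c)
  obtain ⟨C, hC, h⟩ := Ff_bound_im a b ha hb hμ m
  set μ := ∑ k, (b k - a k) with hμd
  obtain ⟨E, hE⟩ := (isCompact_Icc (a := c) (b := σ)).exists_bound_of_continuousOn (f := fun x : ℝ => Real.exp (x * w)) (by fun_prop)
  have hhor : ∀ (e : ℝ), |e| = 1 → Tendsto (fun R : ℝ => ∫ x in c..σ, Ff a b (x + (e * R : ℝ) * Complex.I) * Complex.exp ((x + (e * R : ℝ) * Complex.I) * w)) atTop (nhds 0) := by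
    intro e he
    have hlim : Tendsto (fun R : ℝ => C * R ^ (-μ) * E * |σ - c|) atTop (nhds (C * 0 * E * |σ - c|)) := by
      apply Tendsto.mul_const
      apply Tendsto.mul_const
      apply Tendsto.const_mul
      exact tendsto_rpow_neg_atTop hμ
    simp only [mul_zero, zero_mul] at hlim
    rw [tendsto_zero_iff_norm_tendsto_zero]
    refine tendsto_of_tendsto_of_tendsto_of_le_of_le' tendsto_const_nhds hlim (Eventually.of_forall fun _ => norm_nonneg _) ?_
    filter_upwards [eventually_ge_atTop 1] with R hR
    apply intervalIntegral.norm_integral_le_of_norm_le_const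
    intro x hx
    rw [Set.uIoc_of_le hcσ] at hx
    have h1 : |e * R| = R := by rw [abs_mul, he, one_mul, abs_of_nonneg (by linarith)]
    rw [norm_mul, norm_cexp_line]
    have h2 := h (x + (e * R : ℝ) * Complex.I) (by simp; linarith [hx.1]) (by simpa [h1] using hR)
    have h3 : |(x + (e * R : ℝ) * Complex.I : ℂ).im| = R := by simp [h1]
    rw [h3] at h2
    have h4 := hE x ⟨hx.1.le, hx.2⟩
    rw [Real.norm_of_nonneg (Real.exp_pos _).le] at h4
    have : 0 < R := by linarith
    gcongr
  have h1 := hhor (-1) (by simp)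
  have h2 := hhor 1 (by simp)
  simp only [neg_mul, one_mul] at h1 h2
  have h3 := hL.add ((h1.sub h2).const_mul Complex.I)
  simp only [sub_zero, mul_zero, add_zero] at h3
  refine h3.congr fun R => ?_
  rw [rect a b c σ R w hcσ hc]
  ring

end

section
variable {p : ℕ}

lemma osc_bound (f f' : ℝ → ℂ) (hf : ∀ t, HasDerivAt f (f' t) t) (hf' : Continuous f') (ν C1 C2 : ℝ) (hν : 0 < ν) (hν1 : ν < 1)
    (hC1 : 0 ≤ C1) (hC2 : 0 ≤ C2)
    (h1 : ∀ t, 0 < t → ‖f t‖ ≤ C1 * t ^ (-ν)) (h2 : ∀ t, 0 < t → ‖f' t‖ ≤ C2 * t ^ (-1 - ν)) :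
    ∀ R w : ℝ, 0 ≤ R → w ≠ 0 →
      ‖∫ t in (0:ℝ)..R, f t * Complex.exp (t * Complex.I * w)‖ ≤ (C1 / (1 - ν) + 2 * C1 + C2 / ν) * |w| ^ (ν - 1) := by
  have hfc : Continuous f := continuous_iff_continuousAt.2 fun t => (hf t).continuousAt
  have hne : ∀ t w : ℝ, ‖Complex.exp (t * Complex.I * w)‖ = 1 := by
    intro t w; rw [Complex.norm_exp]; simp
  have hfirst : ∀ R w : ℝ, 0 ≤ R → w ≠ 0 → R ≤ 1 / |w| →
      ‖∫ t in (0:ℝ)..R, f t * Complex.exp (t * Complex.I * w)‖ ≤ C1 / (1 - ν) * |w| ^ (ν - 1) := by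
    intro R w hR hw hRw
    have hw' : 0 < |w| := abs_pos.2 hw
    have e1 : ‖∫ t in (0:ℝ)..R, f t * Complex.exp (t * Complex.I * w)‖ ≤ ∫ t in (0:ℝ)..R, C1 * t ^ (-ν) := by
      apply intervalIntegral.norm_integral_le_of_norm_le hR
      · filter_upwards with t ht
        rw [norm_mul, hne, mul_one]
        exact h1 t ht.1
      · exact (intervalIntegral.intervalIntegrable_rpow' (by linarith)).const_mul _
    refine e1.trans ?_
    rw [intervalIntegral.integral_const_mul, integral_rpow (Or.inl (by linarith)), Real.zero_rpow (by linarith), sub_zero,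
      div_mul_eq_mul_div, mul_div_assoc]
    have e2 : R ^ (-ν + 1) ≤ |w| ^ (ν - 1) := by
      calc R ^ (-ν + 1) ≤ (1 / |w|) ^ (-ν + 1) := Real.rpow_le_rpow hR hRw (by linarith)
        _ = _ := by rw [one_div, Real.inv_rpow hw'.le, ← Real.rpow_neg hw'.le]; ring_nf
    rw [show -ν + 1 = 1 - ν by ring] at *
    have : 0 < 1 - ν := by linarith
    gcongr
  intro R w hR hw
  have hw' : 0 < |w| := abs_pos.2 hw
  have hwp : 0 ≤ |w| ^ (ν - 1) := by positivity
  have h1ν : 0 < 1 - ν := by linarith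
  rcases le_total R (1 / |w|) with hRw | hRw
  · refine (hfirst R w hR hw hRw).trans ?_
    gcongr
    have : 0 ≤ C2 / ν := by positivity
    linarith
  · set T := 1 / |w| with hT
    have hT0 : 0 < T := by positivity
    have hcont : Continuous fun t : ℝ => f t * Complex.exp (t * Complex.I * w) := by fun_prop
    rw [← intervalIntegral.integral_add_adjacent_intervals (hcont.intervalIntegrable 0 T) (hcont.intervalIntegrable T R)]
    have hwI : Complex.I * (w:ℂ) ≠ 0 := mul_ne_zero Complex.I_ne_zero (by exact_mod_cast hw)
    have hE : ∀ t : ℝ, HasDerivAt (fun t : ℝ => Complex.exp (t * Complex.I * w) / (Complex.I * w)) (Complex.exp (t * Complex.I * w)) t := by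
      intro t
      have e1 : HasDerivAt (fun t : ℝ => (t * Complex.I * w : ℂ)) (Complex.I * w) t := by
        simpa using ((Complex.ofRealCLM.hasDerivAt (x := t)).mul_const Complex.I).mul_const (w : ℂ)
      exact (e1.cexp.div_const (Complex.I * w)).congr_deriv (mul_div_cancel_right₀ _ hwI)
    have hibp := intervalIntegral.integral_mul_deriv_eq_deriv_mul (a := T) (b := R) (u := f) (u' := f')
      (v := fun t : ℝ => Complex.exp (t * Complex.I * w) / (Complex.I * w)) (v' := fun t : ℝ => Complex.exp (t * Complex.I * w))
      (fun t _ => hf t) (fun t _ => hE t) (hf'.intervalIntegrable _ _) (by apply Continuous.intervalIntegrable; fun_prop)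
    have hnE : ∀ t : ℝ, ‖Complex.exp (t * Complex.I * w) / (Complex.I * w)‖ = T := by
      intro t
      rw [norm_div, hne, norm_mul, Complex.norm_I, one_mul, Complex.norm_real, Real.norm_eq_abs]
    have hTν : T ^ (-ν) * T = |w| ^ (ν - 1) := by
      rw [hT, ← Real.rpow_add_one (by positivity), one_div, Real.inv_rpow hw'.le, ← Real.rpow_neg hw'.le]; ring_nf
    have b1 : ‖f R * (Complex.exp (R * Complex.I * w) / (Complex.I * w))‖ ≤ C1 * |w| ^ (ν - 1) := by
      rw [norm_mul, hnE, ← hTν, ← mul_assoc]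
      gcongr
      refine (h1 R (by linarith)).trans ?_
      gcongr ?_ * ?_
      exact Real.rpow_le_rpow_of_nonpos hT0 hRw (by linarith)
    have b2 : ‖f T * (Complex.exp (T * Complex.I * w) / (Complex.I * w))‖ ≤ C1 * |w| ^ (ν - 1) := by
      rw [norm_mul, hnE, ← hTν, ← mul_assoc]
      gcongr
      exact h1 T hT0
    have b3 : ‖∫ t in T..R, f' t * (Complex.exp (t * Complex.I * w) / (Complex.I * w))‖ ≤ C2 / ν * |w| ^ (ν - 1) := by
      have e1 : ‖∫ t in T..R, f' t * (Complex.exp (t * Complex.I * w) / (Complex.I * w))‖ ≤ ∫ t in T..R, C2 * T * t ^ (-1 - ν) := by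
        apply intervalIntegral.norm_integral_le_of_norm_le hRw
        · filter_upwards with t ht
          rw [norm_mul, hnE]
          have := h2 t (by linarith [ht.1])
          calc _ ≤ (C2 * t ^ (-1 - ν)) * T := by gcongr
            _ = _ := by ring
        · apply IntervalIntegrable.const_mul
          apply intervalIntegral.intervalIntegrable_rpow
          right
          rw [Set.uIcc_of_le hRw]; intro h; linarith [h.1]
      refine e1.trans ?_
      rw [intervalIntegral.integral_const_mul, integral_rpow (Or.inr ⟨by linarith, by rw [Set.uIcc_of_le hRw]; intro h; linarith [h.1]⟩),
        show -1 - ν + 1 = -ν by ring, ← hTν]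
      have e2 : (R ^ (-ν) - T ^ (-ν)) / -ν ≤ T ^ (-ν) / ν := by
        rw [div_neg, ← neg_div]
        gcongr
        have : 0 ≤ R ^ (-ν) := by positivity
        linarith
      calc _ ≤ C2 * T * (T ^ (-ν) / ν) := by gcongr
        _ = _ := by ring
    have b4 := hfirst T w hT0.le hw le_rfl
    refine (norm_add_le _ _).trans ?_
    rw [hibp]
    have b5 := norm_sub_le (f R * (Complex.exp (R * Complex.I * w) / (Complex.I * w)) - f T * (Complex.exp (T * Complex.I * w) / (Complex.I * w))) (∫ t in T..R, f' t * (Complex.exp (t * Complex.I * w) / (Complex.I * w)))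
    have b6 := norm_sub_le (f R * (Complex.exp (R * Complex.I * w) / (Complex.I * w))) (f T * (Complex.exp (T * Complex.I * w) / (Complex.I * w)))
    linarith

end

section
variable {p : ℕ}

lemma gR_bound (a b : Fin p → ℝ) (ha : ∀ k, 0 ≤ a k) (hb : ∀ k, 0 ≤ b k) (hμ : 0 < ∑ k, (b k - a k))
    (c : ℝ) (hc : 0 < c) : ∃ C ν : ℝ, 0 ≤ C ∧ 0 < ν ∧ ν < 1 ∧ ∀ R w : ℝ, 0 ≤ R → w ≠ 0 →
      ‖gR a b c R w‖ ≤ C * Real.exp (c * w) * |w| ^ (ν - 1) := by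
  obtain ⟨C, hC, hCb⟩ := Ff_bound a b ha hb hμ c hc
  obtain ⟨K, hK, hKb⟩ := Qf_bound a b ha hb c hc
  set μ := ∑ k, (b k - a k) with hμd
  set ν := min μ (1 / 2) with hνd
  have hν : 0 < ν := lt_min hμ (by norm_num)
  have hν1 : ν < 1 := (min_le_right _ _).trans_lt (by norm_num)
  have hνμ : ν ≤ μ := min_le_left _ _
  set D := C * c ^ (-(μ - ν)) with hD
  have hD0 : 0 ≤ D := by positivity
  have hre : ∀ t : ℝ, (c + t * Complex.I : ℂ).re = c := by intro t; simp
  have hsc : ∀ t : ℝ, c ≤ ‖(c + t * Complex.I : ℂ)‖ := by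
    intro t
    have := Complex.re_le_norm (c + t * Complex.I); rwa [hre] at this
  have hst : ∀ t : ℝ, |t| ≤ ‖(c + t * Complex.I : ℂ)‖ := by
    intro t
    have := Complex.abs_im_le_norm (c + t * Complex.I); simpa using this
  have hb1 : ∀ t : ℝ, t ≠ 0 → ‖Ff a b (c + t * Complex.I)‖ ≤ D * |t| ^ (-ν) := by
    intro t ht
    have ht' : 0 < |t| := abs_pos.2 ht
    refine (hCb _ (hre t).ge).trans ?_
    have hs0 : 0 < ‖(c + t * Complex.I : ℂ)‖ := hc.trans_le (hsc t)
    rw [show -μ = -(μ - ν) + -ν by ring, Real.rpow_add hs0, hD, mul_assoc]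
    have e1 := Real.rpow_le_rpow_of_nonpos hc (hsc t) (by linarith : -(μ - ν) ≤ 0)
    have e2 := Real.rpow_le_rpow_of_nonpos ht' (hst t) (by linarith : -ν ≤ 0)
    gcongr
  have hb2 : ∀ t : ℝ, t ≠ 0 → ‖-(Qf a b (c + t * Complex.I) * Ff a b (c + t * Complex.I)) * Complex.I‖ ≤ K * D * |t| ^ (-1 - ν) := by
    intro t ht
    have ht' : 0 < |t| := abs_pos.2 ht
    rw [norm_mul, Complex.norm_I, mul_one, norm_neg, norm_mul]
    calc _ ≤ (K / |t|) * (D * |t| ^ (-ν)) := by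
          gcongr
          · exact (hKb _ (hre t).ge).trans (by have := hst t; gcongr)
          · exact hb1 t ht
      _ = _ := by
          rw [show -1 - ν = -1 + -ν by ring, Real.rpow_add ht', Real.rpow_neg_one]; ring
  have hcont : Continuous (fun t : ℝ => -(Qf a b (c + t * Complex.I) * Ff a b (c + t * Complex.I)) * Complex.I) :=
    ((Qf_cont a b ha hb c hc).mul (Ff_cont a b c (fun k => by linarith [ha k]))).neg.mul continuous_const
  have hFc := Ff_cont a b c (fun k => by linarith [ha k])
  have hder := Ff_deriv a b ha hb hμ c hc
  have o1 := osc_bound _ _ hder hcont ν D (K * D) hν hν1 hD0 (by positivity)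
    (fun t ht => by simpa [abs_of_pos ht] using hb1 t ht.ne') (fun t ht => by have := hb2 t ht.ne'; rwa [abs_of_pos ht] at this)
  have o2 := osc_bound (fun t : ℝ => Ff a b (c + (-t : ℝ) * Complex.I))
    (fun t : ℝ => -(-(Qf a b (c + (-t : ℝ) * Complex.I) * Ff a b (c + (-t : ℝ) * Complex.I)) * Complex.I))
    (fun t => ((hder (-t)).scomp t (hasDerivAt_neg t)).congr_deriv (by simp))
    (hcont.comp continuous_neg).neg ν D (K * D) hν hν1 hD0 (by positivity)
    (fun t ht => by have := hb1 (-t) (neg_ne_zero.2 ht.ne'); rwa [abs_neg, abs_of_pos ht] at this)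
    (fun t ht => by have := hb2 (-t) (neg_ne_zero.2 ht.ne'); rw [abs_neg, abs_of_pos ht] at this; rwa [norm_neg])
  set M := D / (1 - ν) + 2 * D + K * D / ν with hM
  have h1ν : 0 < 1 - ν := by linarith
  refine ⟨2 * M, ν, by positivity, hν, hν1, fun R w hR hw => ?_⟩
  have e0 : Continuous fun t : ℝ => Ff a b (c + t * Complex.I) * Complex.exp (t * Complex.I * w) := by fun_prop
  have e1 : gR a b c R w = Complex.exp (c * w) * ((∫ t in (0:ℝ)..R, Ff a b (c + (-t : ℝ) * Complex.I) * Complex.exp (t * Complex.I * (-w : ℝ))) +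
      ∫ t in (0:ℝ)..R, Ff a b (c + t * Complex.I) * Complex.exp (t * Complex.I * w)) := by
    have e2 : (∫ t in (0:ℝ)..R, Ff a b (c + (-t : ℝ) * Complex.I) * Complex.exp (t * Complex.I * (-w : ℝ))) =
        ∫ t in (-R)..0, Ff a b (c + t * Complex.I) * Complex.exp (t * Complex.I * w) := by
      have := intervalIntegral.integral_comp_neg (a := 0) (b := R) (fun t : ℝ => Ff a b (c + t * Complex.I) * Complex.exp (t * Complex.I * w))
      rw [neg_zero] at this
      rw [← this]
      congr 1; ext t
      push_cast; congr 2; ring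
    rw [e2, intervalIntegral.integral_add_adjacent_intervals (e0.intervalIntegrable _ _) (e0.intervalIntegrable _ _), gR,
      ← intervalIntegral.integral_const_mul]
    congr 1; ext t
    rw [add_mul, Complex.exp_add]; ring
  rw [e1, norm_mul]
  have e3 : ‖Complex.exp (c * w)‖ = Real.exp (c * w) := by rw [Complex.norm_exp]; simp
  rw [e3]
  have f1 := o1 R w hR hw
  have f2 := o2 R (-w) hR (neg_ne_zero.2 hw)
  rw [abs_neg] at f2
  calc _ ≤ Real.exp (c * w) * (M * |w| ^ (ν - 1) + M * |w| ^ (ν - 1)) := by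
        gcongr
        exact (norm_add_le _ _).trans (add_le_add f2 f1)
    _ = _ := by ring

lemma gR_ibp (a b : Fin p → ℝ) (ha : ∀ k, 0 ≤ a k) (hb : ∀ k, 0 ≤ b k) (hμ : 0 < ∑ k, (b k - a k))
    (c : ℝ) (hc : 0 < c) (w R : ℝ) :
    (w:ℂ) * gR a b c R w = -Complex.I * (Ff a b (c + R * Complex.I) * Complex.exp ((c + R * Complex.I) * w)
        - Ff a b (c + (-R:ℝ) * Complex.I) * Complex.exp ((c + (-R:ℝ) * Complex.I) * w)) +
      ∫ t in (-R)..R, Qf a b (c + t * Complex.I) * Ff a b (c + t * Complex.I) * Complex.exp ((c + t * Complex.I) * w) := by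
  have hcont : Continuous (fun t : ℝ => -(Qf a b (c + t * Complex.I) * Ff a b (c + t * Complex.I)) * Complex.I) :=
    ((Qf_cont a b ha hb c hc).mul (Ff_cont a b c (fun k => by linarith [ha k]))).neg.mul continuous_const
  have hE : ∀ t : ℝ, HasDerivAt (fun t : ℝ => Complex.exp ((c + t * Complex.I) * w)) (Complex.exp ((c + t * Complex.I) * w) * (Complex.I * w)) t := by
    intro t
    have e1 : HasDerivAt (fun t : ℝ => ((c + t * Complex.I) * w : ℂ)) (Complex.I * w) t := by
      simpa using (((Complex.ofRealCLM.hasDerivAt (x := t)).mul_const Complex.I).const_add (c:ℂ)).mul_const (w : ℂ)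
    exact e1.cexp
  have hibp := intervalIntegral.integral_mul_deriv_eq_deriv_mul (a := -R) (b := R)
    (fun t _ => Ff_deriv a b ha hb hμ c hc t) (fun t _ => hE t) (hcont.intervalIntegrable _ _) (by apply Continuous.intervalIntegrable; fun_prop)
  have e1 : ∫ t in (-R)..R, Ff a b (c + t * Complex.I) * (Complex.exp ((c + t * Complex.I) * w) * (Complex.I * w)) = Complex.I * w * gR a b c R w := by
    rw [gR, ← intervalIntegral.integral_const_mul]
    congr 1; ext t; ring
  have e2 : ∫ t in (-R)..R, -(Qf a b (c + t * Complex.I) * Ff a b (c + t * Complex.I)) * Complex.I * Complex.exp ((c + t * Complex.I) * w) =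
      -Complex.I * ∫ t in (-R)..R, Qf a b (c + t * Complex.I) * Ff a b (c + t * Complex.I) * Complex.exp ((c + t * Complex.I) * w) := by
    rw [← intervalIntegral.integral_const_mul]
    congr 1; ext t; ring
  rw [e1, e2] at hibp
  have hI := Complex.I_mul_I
  linear_combination (-Complex.I) * hibp + ((w:ℂ) * gR a b c R w - ∫ t in (-R)..R, Qf a b (c + t * Complex.I) * Ff a b (c + t * Complex.I) * Complex.exp ((c + t * Complex.I) * w)) * hI

lemma gR_fubini (a b : Fin p → ℝ) (ha : ∀ k, 0 ≤ a k) (hb : ∀ k, 0 ≤ b k) (hμ : 0 < ∑ k, (b k - a k))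
    (c : ℝ) (hc : 0 < c) (w R : ℝ) (hR : 0 ≤ R) :
    ∫ t in (-R)..R, Qf a b (c + t * Complex.I) * Ff a b (c + t * Complex.I) * Complex.exp ((c + t * Complex.I) * w)
      = ∫ v in Set.Ioi (0:ℝ), (phi a b v : ℂ) * gR a b c R (w - v) := by
  obtain ⟨C, hC, hCb⟩ := Ff_bound a b ha hb hμ c hc
  obtain ⟨B, hB, hBb⟩ := integrand_bound a b ha hb c hc
  set μ := ∑ k, (b k - a k) with hμd
  have hFc := Ff_cont a b c (fun k => by linarith [ha k])
  have hRR : -R ≤ R := by linarith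
  simp only [gR, Qf]
  simp only [intervalIntegral.integral_of_le hRR]
  simp only [← integral_const_mul]
  rw [← integral_integral_swap]
  · apply integral_congr_ae
    filter_upwards with t
    rw [mul_assoc, ← integral_mul_const]
    congr 1; ext v
    rw [show (c + t * Complex.I) * ((w - v : ℝ):ℂ) = -((c + t * Complex.I) * v) + (c + t * Complex.I) * w by push_cast; ring, Complex.exp_add]
    ring
  · have hIntg : Integrable (fun z : ℝ × ℝ => (C * c ^ (-μ) * Real.exp (c * w)) * (B * Real.exp (-(c / 2) * z.2)))
        ((volume.restrict (Set.Ioc (-R) R)).prod (volume.restrict (Set.Ioi (0:ℝ)))) :=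
      Integrable.mul_prod (f := fun _ : ℝ => C * c ^ (-μ) * Real.exp (c * w)) (integrable_const _) (bound_integrable B c hc)
    refine hIntg.mono' ?_ ?_
    · apply Measurable.aestronglyMeasurable
      have h1 := phi_meas a b
      have h2 := hFc.measurable
      refine Measurable.mul (f := fun z : ℝ × ℝ => (phi a b z.2 : ℂ)) (g := fun z : ℝ × ℝ => Ff a b (c + z.1 * Complex.I) * Complex.exp ((c + z.1 * Complex.I) * ((w - z.2 : ℝ):ℂ))) ?_ ?_
      · fun_prop
      · apply Measurable.mul
        · exact h2.comp measurable_fst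
        · fun_prop
    · have : ∀ᵐ z ∂((volume.restrict (Set.Ioc (-R) R)).prod (volume.restrict (Set.Ioi (0:ℝ)))), z.2 ∈ Set.Ioi (0:ℝ) := by
        have h1 : ∀ᵐ v ∂(volume.restrict (Set.Ioi (0:ℝ))), v ∈ Set.Ioi (0:ℝ) := ae_restrict_mem measurableSet_Ioi
        exact Measure.quasiMeasurePreserving_snd.ae h1
      filter_upwards [this] with z hz
      obtain ⟨t, v⟩ := z
      have hv : 0 < v := hz
      simp only [Function.uncurry]
      have e1 : (phi a b v : ℂ) * (Ff a b (c + t * Complex.I) * Complex.exp ((c + t * Complex.I) * ((w - v : ℝ):ℂ)))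
        = (Ff a b (c + t * Complex.I) * Complex.exp ((c + t * Complex.I) * w)) * ((phi a b v : ℂ) * Complex.exp (-((c + t * Complex.I) * v))) := by
        rw [show (c + t * Complex.I) * ((w - v : ℝ):ℂ) = -((c + t * Complex.I) * v) + (c + t * Complex.I) * w by push_cast; ring, Complex.exp_add]
        ring
      rw [e1, norm_mul, norm_mul, norm_cexp_line]
      have h1 := hBb (c + t * Complex.I) (by simp) v hv
      have h2 := hCb (c + t * Complex.I) (by simp)
      have h3 : ‖(c + t * Complex.I : ℂ)‖ ^ (-μ) ≤ c ^ (-μ) := by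
        apply Real.rpow_le_rpow_of_nonpos hc _ (by linarith)
        have := Complex.re_le_norm (c + t * Complex.I)
        simpa using this
      have h4 : ‖Ff a b (c + t * Complex.I)‖ ≤ C * c ^ (-μ) := h2.trans (by gcongr)
      gcongr

lemma rpow_abs_bound (ν x : ℝ) (hν1 : ν < 1) (hx : x ≠ 0) :
    |x| ^ (ν - 1) ≤ 1 + (Set.Ioc (0:ℝ) 1).indicator (fun y => y ^ (ν - 1)) x + (Set.Ioc (0:ℝ) 1).indicator (fun y => y ^ (ν - 1)) (-x) := by
  have hi : ∀ y : ℝ, 0 ≤ (Set.Ioc (0:ℝ) 1).indicator (fun y => y ^ (ν - 1)) y := by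
    intro y
    apply Set.indicator_nonneg
    intro z hz; exact Real.rpow_nonneg hz.1.le _
  have key : ∀ y : ℝ, 0 < y → y ^ (ν - 1) ≤ 1 + (Set.Ioc (0:ℝ) 1).indicator (fun y => y ^ (ν - 1)) y := by
    intro y hy
    by_cases h : y ≤ 1
    · rw [Set.indicator_of_mem (show y ∈ Set.Ioc (0:ℝ) 1 from ⟨hy, h⟩)]; linarith
    · have := Real.rpow_le_one_of_one_le_of_nonpos (le_of_not_ge h) (by linarith : ν - 1 ≤ 0)
      linarith [hi y]
  rcases lt_or_gt_of_ne hx with h | h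
  · rw [abs_of_neg h]; linarith [key (-x) (by linarith), hi x]
  · rw [abs_of_pos h]; linarith [key x h, hi (-x)]

lemma main_limit (a b : Fin p → ℝ) (ha : ∀ k, 0 ≤ a k) (hb : ∀ k, 0 ≤ b k) (hμ : 0 < ∑ k, (b k - a k))
    (c : ℝ) (hc : 0 < c) (g : ℝ → ℂ) (hg : ∀ w, 0 < w → Tendsto (fun R => gR a b c R w) atTop (nhds (g w)))
    (w : ℝ) (hw : 0 < w) :
    (w:ℂ) * g w = ∫ v in Set.Ioo 0 w, (phi a b v : ℂ) * g (w - v) := by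
  obtain ⟨C, hC, hCb⟩ := Ff_bound a b ha hb hμ c hc
  obtain ⟨B, hB, hBb⟩ := phi_bound' a b ha hb c hc
  obtain ⟨D, ν, hD, hν, hν1, hDb⟩ := gR_bound a b ha hb hμ c hc
  have hFc := Ff_cont a b c (fun k => by linarith [ha k])
  have hbdry : ∀ e : ℝ, |e| = 1 → Tendsto (fun R : ℝ => Ff a b (c + (e * R:ℝ) * Complex.I) * Complex.exp ((c + (e * R:ℝ) * Complex.I) * w)) atTop (nhds 0) := by
    intro e he
    have hlim : Tendsto (fun R : ℝ => C * R ^ (-(∑ k, (b k - a k))) * Real.exp (c * w)) atTop (nhds (C * 0 * Real.exp (c * w))) := by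
      apply Tendsto.mul_const
      apply Tendsto.const_mul
      exact tendsto_rpow_neg_atTop hμ
    simp only [mul_zero, zero_mul] at hlim
    rw [tendsto_zero_iff_norm_tendsto_zero]
    refine tendsto_of_tendsto_of_tendsto_of_le_of_le' tendsto_const_nhds hlim (Eventually.of_forall fun _ => norm_nonneg _) ?_
    filter_upwards [eventually_gt_atTop 0] with R hR
    have h1 : |e * R| = R := by rw [abs_mul, he, one_mul, abs_of_pos hR]
    rw [norm_mul, norm_cexp_line]
    gcongr
    refine (hCb _ (by simp)).trans ?_
    gcongr ?_ * ?_
    apply Real.rpow_le_rpow_of_nonpos hR _ (by linarith)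
    have := Complex.abs_im_le_norm (c + (e * R:ℝ) * Complex.I)
    simpa [h1] using this
  have h1 := hbdry (-1) (by simp)
  have h2 := hbdry 1 (by simp)
  simp only [neg_mul, one_mul] at h1 h2
  have hA : Tendsto (fun R => ∫ v in Set.Ioi (0:ℝ), (phi a b v : ℂ) * gR a b c R (w - v)) atTop (nhds ((w:ℂ) * g w)) := by
    have h3 := ((hg w hw).const_mul (w:ℂ)).sub ((h2.sub h1).const_mul (-Complex.I))
    simp only [sub_zero, mul_zero] at h3
    refine h3.congr' ?_
    filter_upwards [eventually_ge_atTop 0] with R hR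
    rw [← gR_fubini a b ha hb hμ c hc w R hR, gR_ibp a b ha hb hμ c hc w R]
    ring
  refine tendsto_nhds_unique hA ?_
  have hset : ∫ v in Set.Ioo 0 w, (phi a b v : ℂ) * g (w - v) = ∫ v in Set.Ioi (0:ℝ), (Set.Iio w).indicator (fun v => (phi a b v : ℂ) * g (w - v)) v := by
    rw [setIntegral_indicator measurableSet_Iio]; rfl
  rw [hset]
  set ρ : ℝ → ℝ := (Set.Ioc (0:ℝ) 1).indicator (fun y => y ^ (ν - 1)) with hρ
  have hρi : Integrable ρ := by
    rw [hρ, integrable_indicator_iff measurableSet_Ioc]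
    have := intervalIntegral.intervalIntegrable_rpow' (a := 0) (b := 1) (r := ν - 1) (by linarith)
    rwa [intervalIntegrable_iff_integrableOn_Ioc_of_le zero_le_one] at this
  have hρ0 : ∀ y, 0 ≤ ρ y := by
    intro y
    apply Set.indicator_nonneg
    intro z hz; exact Real.rpow_nonneg hz.1.le _
  have hne : ∀ᵐ v : ℝ ∂(volume.restrict (Set.Ioi (0:ℝ))), v ≠ w := by
    apply ae_restrict_of_ae
    simp [ae_iff]
  apply tendsto_integral_filter_of_dominated_convergence
    (fun v => (B * D * Real.exp (c * w)) * (Real.exp (-(c / 2) * v) + ρ (w - v) + ρ (v - w)))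
  · filter_upwards with R
    apply Measurable.aestronglyMeasurable
    apply Measurable.mul
    · exact Complex.measurable_ofReal.comp (phi_meas a b)
    · apply Continuous.measurable
      unfold gR
      apply intervalIntegral.continuous_parametric_intervalIntegral_of_continuous'
      simp only [Function.uncurry_def]
      apply Continuous.mul
      · exact hFc.comp continuous_snd
      · fun_prop
  · filter_upwards [eventually_ge_atTop 0] with R hR
    filter_upwards [hne, ae_restrict_mem measurableSet_Ioi] with v hvw hv
    have hv : 0 < v := hv
    have hx : w - v ≠ 0 := sub_ne_zero.2 hvw.symm
    rw [norm_mul, Complex.norm_real, Real.norm_eq_abs]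
    have e1 := hBb v hv
    have e2 := hDb R (w - v) hR hx
    have e3 := rpow_abs_bound ν (w - v) hν1 hx
    rw [neg_sub] at e3
    have e4 : Real.exp (-(c / 2) * v) ≤ 1 := Real.exp_le_one_iff.2 (by nlinarith)
    calc _ ≤ (B * Real.exp (c / 2 * v)) * (D * Real.exp (c * (w - v)) * |w - v| ^ (ν - 1)) := by gcongr
      _ = (B * D * Real.exp (c * w)) * (Real.exp (-(c / 2) * v) * |w - v| ^ (ν - 1)) := by
        rw [show c * (w - v) = c * w + (-(c / 2) * v + -(c / 2 * v)) by ring, Real.exp_add, Real.exp_add, Real.exp_neg (c / 2 * v)]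
        have := (Real.exp_pos (c / 2 * v)).ne'
        field_simp
      _ ≤ (B * D * Real.exp (c * w)) * (Real.exp (-(c / 2) * v) + ρ (w - v) + ρ (v - w)) := by
        gcongr
        have e5 := Real.exp_pos (-(c / 2) * v)
        have e6 := mul_le_mul_of_nonneg_left e3 e5.le
        have e7 := mul_le_mul_of_nonneg_right e4 (hρ0 (w - v))
        have e8 := mul_le_mul_of_nonneg_right e4 (hρ0 (v - w))
        simp only [← hρ] at e6
        nlinarith
  · apply Integrable.const_mul
    apply Integrable.add
    · apply Integrable.add
      · exact integrableOn_exp_mul_Ioi (by linarith : -(c / 2) < 0) 0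
      · exact (hρi.comp_sub_left w).restrict
    · exact (hρi.comp_sub_right w).restrict
  · filter_upwards [hne] with v hvw
    rcases lt_or_gt_of_ne hvw with h | h
    · rw [Set.indicator_of_mem (show v ∈ Set.Iio w from h)]
      exact (hg (w - v) (by linarith)).const_mul _
    · rw [Set.indicator_of_notMem (show v ∉ Set.Iio w from not_lt.2 h.le)]
      simpa using (gR_vanish a b ha hb hμ c hc (w - v) (by linarith)).const_mul (phi a b v : ℂ)


end

theorem stmt5 (p : ℕ) (hp : 1 ≤ p) (a b : Fin p → ℝ)
    (ha : ∀ k, 0 ≤ a k) (hb : ∀ k, 0 ≤ b k)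
    (hμ : 0 < ∑ k, (b k - a k))
    (c : ℝ) (hc : -(⨅ k, a k) < c)
    (G : ℝ → ℝ)
    (hG : ∀ x ∈ Set.Ioo (0 : ℝ) 1,
      Tendsto (fun R : ℝ => (((2 * Real.pi)⁻¹ : ℝ) : ℂ) *
        ∫ t in -R..R,
          (∏ k, Complex.Gamma ((a k : ℂ) + (c : ℂ) + (t : ℂ) * Complex.I)) /
            (∏ k, Complex.Gamma ((b k : ℂ) + (c : ℂ) + (t : ℂ) * Complex.I)) *
            (x : ℂ) ^ (-((c : ℂ) + (t : ℂ) * Complex.I)))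
        atTop (nhds ((G x : ℂ)))) :
    ∀ x ∈ Set.Ioo (0 : ℝ) 1,
      Real.log (1 / x) * G x =
        ∫ t in x..1, G t * (∑ k, ((x / t) ^ a k - (x / t) ^ b k)) / (t - x) := by
  have hck : ∀ k, 0 < a k + c := by
    intro k
    have := ciInf_le (Set.finite_range a).bddBelow k
    linarith
  have hpi : (((2 * Real.pi)⁻¹ : ℝ) : ℂ) ≠ 0 := by
    rw [Complex.ofReal_ne_zero]; positivity
  set κ : ℂ := (((2 * Real.pi)⁻¹ : ℝ) : ℂ) with hκ
  set σ := max c 1 with hσ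
  have hσ0 : 0 < σ := lt_of_lt_of_le one_pos (le_max_right _ _)
  have hg : ∀ w, 0 < w → Tendsto (fun R => gR a b σ R w) atTop (nhds (κ⁻¹ * (G (Real.exp (-w)) : ℂ))) := by
    intro w hw
    apply gR_shift a b ha hb hμ c σ (le_max_left _ _) hck
    have h1 := (hG (Real.exp (-w)) ⟨Real.exp_pos _, by rw [← Real.exp_zero]; exact Real.exp_lt_exp.2 (by linarith)⟩).const_mul κ⁻¹
    refine h1.congr fun R => ?_
    rw [inv_mul_cancel_left₀ hpi, gR]
    congr 1; ext t
    rw [Ff]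
    simp only [add_assoc]
    congr 1
    rw [Complex.cpow_def_of_ne_zero (by exact_mod_cast (Real.exp_pos _).ne'), ← Complex.ofReal_log (Real.exp_pos _).le, Real.log_exp]
    push_cast
    congr 1; ring
  intro x hx
  set w := Real.log (1 / x) with hw
  have hw' : w = -Real.log x := by rw [hw, one_div, Real.log_inv]
  have hw0 : 0 < w := by rw [hw']; linarith [Real.log_neg hx.1 hx.2]
  have hxw : Real.exp (-w) = x := by rw [hw', neg_neg, Real.exp_log hx.1]
  have h1 := main_limit a b ha hb hμ σ hσ0 _ hg w hw0
  rw [hxw] at h1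
  have h2 : (w:ℂ) * (G x : ℂ) = ((∫ v in Set.Ioo 0 w, phi a b v * G (Real.exp (-(w - v))) : ℝ) : ℂ) := by
    rw [← integral_complex_ofReal]
    have h3 : ∫ v in Set.Ioo 0 w, (phi a b v : ℂ) * (κ⁻¹ * (G (Real.exp (-(w - v))) : ℂ)) = κ⁻¹ * ∫ v in Set.Ioo 0 w, ((phi a b v * G (Real.exp (-(w - v))) : ℝ) : ℂ) := by
      rw [← integral_const_mul]
      congr 1; ext v; push_cast; ring
    rw [h3, mul_left_comm] at h1
    exact mul_left_cancel₀ (inv_ne_zero hpi) h1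
  have h3 : w * G x = ∫ v in Set.Ioo 0 w, phi a b v * G (Real.exp (-(w - v))) := by exact_mod_cast h2
  rw [h3, intervalIntegral.integral_of_le hx.2.le, integral_Ioc_eq_integral_Ioo]
  have himg : (fun v => Real.exp (-(w - v))) '' Set.Ioo 0 w = Set.Ioo x 1 := by
    ext t
    constructor
    · rintro ⟨v, hv, rfl⟩
      refine ⟨?_, ?_⟩
      · rw [← hxw]; exact Real.exp_lt_exp.2 (by linarith [hv.1])
      · rw [← Real.exp_zero]; exact Real.exp_lt_exp.2 (by linarith [hv.2])
    · rintro ⟨ht1, ht2⟩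
      have ht0 : 0 < t := hx.1.trans ht1
      refine ⟨w + Real.log t, ⟨?_, ?_⟩, ?_⟩
      · rw [hw']; linarith [Real.log_lt_log hx.1 ht1]
      · linarith [Real.log_neg ht0 ht2]
      · simp only []
        rw [show -(w - (w + Real.log t)) = Real.log t by ring, Real.exp_log ht0]
  rw [← himg, integral_image_eq_integral_abs_deriv_smul (f' := fun v => Real.exp (-(w - v))) measurableSet_Ioo]
  · apply setIntegral_congr_fun measurableSet_Ioo
    intro v hv
    simp only []
    set t := Real.exp (-(w - v)) with ht
    have ht0 : 0 < t := Real.exp_pos _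
    have hxt : x / t = Real.exp (-v) := by
      rw [← hxw, ht, ← Real.exp_sub]; ring_nf
    have hpow : ∀ y : ℝ, (x / t) ^ y = Real.exp (-(y * v)) := by
      intro y; rw [hxt, ← Real.exp_mul]; ring_nf
    have htx : t - x = t * (1 - Real.exp (-v)) := by
      rw [← hxt]; field_simp
    simp only [hpow]
    rw [abs_of_pos ht0, smul_eq_mul, htx, phi]
    have h5 : 1 - Real.exp (-v) ≠ 0 := by
      have : Real.exp (-v) < 1 := by rw [← Real.exp_zero]; exact Real.exp_lt_exp.2 (by linarith [hv.1])
      linarith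
    rw [mul_div_assoc', mul_div_mul_left _ _ ht0.ne']
    ring
  · intro v _
    apply HasDerivAt.hasDerivWithinAt
    have : HasDerivAt (fun v => -(w - v)) 1 v := 
      (((hasDerivAt_id v).const_sub w).neg).congr_deriv (by simp)
    exact this.exp.congr_deriv (by simp)
  · intro v _ v' _ h
    have := Real.exp_injective h
    linarith
end

section
/- Let p, q ≥ 1, let A_1,…,A_p, B_1,…,B_q be strictly positive and a_1,…,a_p, b_1,…,b_q be nonnegative reals, and set W(x) = ∏_{i=1}^p Γ(A_i x + a_i) / ∏_{j=1}^q Γ(B_j x + b_j) for x > 0, and P(u) = Σ_{i=1}^p e^{−a_i u/A_i}/(1 − e^{−u/A_i}) − Σ_{j=1}^q e^{−b_j u/B_j}/(1 − e^{−u/B_j}) for u > 0. Then (log W)′′ is completely monotonic on (0,∞) if and only if P(u) ≥ 0 for all u > 0; and in that case (log W)′′(x) = ∫_0^∞ e^{−xu} u P(u) du for all x > 0. -/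
open MeasureTheory

open Set Filter Topology in
/-- moment integrability -/
lemma aux_mom_int (n : ℕ) {x : ℝ} (hx : 0 < x) :
    IntegrableOn (fun u : ℝ => u ^ n * Real.exp (-x * u)) (Ioi 0) := by
  have h := integrableOn_rpow_mul_exp_neg_mul_rpow (p := 1) (s := (n : ℝ)) (b := x)
    (by have : (0 : ℝ) ≤ n := Nat.cast_nonneg n
        linarith) one_pos hx
  simpa [Real.rpow_natCast] using h

open Set Filter Topology in
lemma aux_mom (n : ℕ) {x : ℝ} (hx : 0 < x) :
    ∫ u in Ioi (0 : ℝ), u ^ n * Real.exp (-x * u) = (n.factorial : ℝ) / x ^ (n + 1) := by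
  have h := Real.integral_rpow_mul_exp_neg_mul_Ioi (a := (n : ℝ) + 1) (r := x) (by positivity) hx
  rw [Real.Gamma_nat_eq_factorial] at h
  have h2 : (1 / x) ^ ((n : ℝ) + 1) = (1 / x) ^ (n + 1) := by
    rw [← Real.rpow_natCast]; push_cast; rfl
  rw [h2] at h
  simp only [add_sub_cancel_right, Real.rpow_natCast] at h
  simp only [neg_mul]
  rw [h, one_div, inv_pow]
  field_simp

/-- admissible densities -/
def LapOK (g : ℝ → ℝ) (C : ℝ) : Prop :=
  ContinuousOn g (Set.Ioi 0) ∧ ∀ u > 0, |g u| ≤ C * (1 + u)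

/-- derivatives of the Laplace transform -/
noncomputable def Lap (g : ℝ → ℝ) (n : ℕ) (x : ℝ) : ℝ :=
  ∫ u in Set.Ioi (0 : ℝ), (-u) ^ n * Real.exp (-x * u) * g u

lemma lap_meas {g : ℝ → ℝ} {C : ℝ} (hg : LapOK g C) (n : ℕ) (x : ℝ) :
    AEStronglyMeasurable (fun u : ℝ => (-u) ^ n * Real.exp (-x * u) * g u)
      (volume.restrict (Set.Ioi 0)) := by
  apply ContinuousOn.aestronglyMeasurable _ measurableSet_Ioi
  exact ContinuousOn.mul (by fun_prop) hg.1

lemma lap_bound_int (n : ℕ) {x : ℝ} (hx : 0 < x) (C : ℝ) :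
    IntegrableOn (fun u : ℝ => C * (u ^ n * Real.exp (-x * u) + u ^ (n + 1) * Real.exp (-x * u)))
      (Set.Ioi 0) :=
  ((aux_mom_int n hx).add (aux_mom_int (n + 1) hx)).const_mul C

lemma lap_bound {g : ℝ → ℝ} {C : ℝ} (hg : LapOK g C) (n : ℕ) {x y : ℝ} (hxy : y ≤ x)
    {u : ℝ} (hu : 0 < u) :
    ‖(-u) ^ n * Real.exp (-x * u) * g u‖ ≤
      C * (u ^ n * Real.exp (-y * u) + u ^ (n + 1) * Real.exp (-y * u)) := by
  have h1 := hg.2 u hu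
  have h2 : Real.exp (-x * u) ≤ Real.exp (-y * u) := by
    apply Real.exp_le_exp.2; nlinarith
  have h3 : ‖(-u) ^ n * Real.exp (-x * u) * g u‖ = u ^ n * Real.exp (-x * u) * |g u| := by
    rw [norm_mul, norm_mul, norm_pow, norm_neg, Real.norm_of_nonneg hu.le,
      Real.norm_of_nonneg (Real.exp_pos _).le, Real.norm_eq_abs]
  rw [h3]
  calc u ^ n * Real.exp (-x * u) * |g u| ≤ u ^ n * Real.exp (-y * u) * (C * (1 + u)) := by
        gcongr
    _ = _ := by ring

lemma lap_int {g : ℝ → ℝ} {C : ℝ} (hg : LapOK g C) (n : ℕ) {x : ℝ} (hx : 0 < x) :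
    IntegrableOn (fun u : ℝ => (-u) ^ n * Real.exp (-x * u) * g u) (Set.Ioi 0) := by
  refine Integrable.mono' (lap_bound_int n hx C) (lap_meas hg n x) ?_
  filter_upwards [ae_restrict_mem measurableSet_Ioi] with u hu
  exact lap_bound hg n le_rfl hu

lemma lap_hasDerivAt {g : ℝ → ℝ} {C : ℝ} (hg : LapOK g C) (n : ℕ) {x : ℝ} (hx : 0 < x) :
    HasDerivAt (Lap g n) (Lap g (n + 1) x) x := by
  have hx2 : 0 < x / 2 := by positivity
  refine (hasDerivAt_integral_of_dominated_loc_of_deriv_le (s := Set.Ioi (x / 2))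
    (μ := volume.restrict (Set.Ioi 0))
    (F := fun x u => (-u) ^ n * Real.exp (-x * u) * g u)
    (F' := fun x u => (-u) ^ (n + 1) * Real.exp (-x * u) * g u)
    (bound := fun u : ℝ => C * (u ^ (n + 1) * Real.exp (-(x / 2) * u)
      + u ^ (n + 1 + 1) * Real.exp (-(x / 2) * u)))
    (Ioi_mem_nhds (by linarith)) (Filter.Eventually.of_forall fun y => lap_meas hg n y)
    (lap_int hg n hx) (lap_meas hg (n + 1) x) ?_ (lap_bound_int (n + 1) hx2 C) ?_).2
  · filter_upwards [ae_restrict_mem measurableSet_Ioi] with u hu y hy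
    exact lap_bound hg (n + 1) (le_of_lt hy) hu
  · filter_upwards [ae_restrict_mem measurableSet_Ioi] with u hu y hy
    have h : HasDerivAt (fun y : ℝ => -y * u) (-u) y := by
      simpa using ((hasDerivAt_id y).neg.mul_const u)
    have := ((h.exp.const_mul ((-u) ^ n)).mul_const (g u))
    refine this.congr_deriv ?_
    ring

lemma lap_iter {g : ℝ → ℝ} {C : ℝ} (hg : LapOK g C) (n : ℕ) :
    ∀ x > 0, iteratedDeriv n (Lap g 0) x = Lap g n x := by
  induction n with
  | zero => intro x _; simp
  | succ n ih =>
    intro x hx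
    rw [iteratedDeriv_succ]
    have : iteratedDeriv n (Lap g 0) =ᶠ[nhds x] Lap g n := by
      filter_upwards [Ioi_mem_nhds hx] with y hy using ih y hy
    rw [this.deriv_eq, (lap_hasDerivAt hg n hx).deriv]

lemma lap_contDiffOn {g : ℝ → ℝ} {C : ℝ} (hg : LapOK g C) (k : ℕ) :
    ∀ n : ℕ, ContDiffOn ℝ k (Lap g n) (Set.Ioi 0) := by
  induction k with
  | zero =>
    intro n
    rw [Nat.cast_zero, contDiffOn_zero]
    exact fun x hx => (lap_hasDerivAt hg n hx).continuousAt.continuousWithinAt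
  | succ k ih =>
    intro n
    rw [Nat.cast_add, Nat.cast_one, contDiffOn_succ_iff_deriv_of_isOpen isOpen_Ioi]
    refine ⟨fun x hx => (lap_hasDerivAt hg n hx).differentiableAt.differentiableWithinAt,
      fun h => ?_, (ih (n + 1)).congr fun x hx => (lap_hasDerivAt hg n hx).deriv⟩
    exact absurd h (by simp)

lemma lap_contDiffAt {g : ℝ → ℝ} {C : ℝ} (hg : LapOK g C) {x : ℝ} (hx : 0 < x) :
    ContDiffAt ℝ (⊤ : ℕ∞) (Lap g 0) x := by
  rw [contDiffAt_infty]
  exact fun k => (lap_contDiffOn hg k 0).contDiffAt (Ioi_mem_nhds hx)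

lemma lap_pos {g : ℝ → ℝ} (hg : ∀ u > 0, 0 ≤ g u) (n : ℕ) (x : ℝ) :
    0 ≤ (-1 : ℝ) ^ n * Lap g n x := by
  unfold Lap
  rw [← integral_const_mul]
  refine setIntegral_nonneg measurableSet_Ioi fun u hu => ?_
  have hu' : 0 < u := hu
  have : (-1 : ℝ) ^ n * ((-u) ^ n * Real.exp (-x * u) * g u)
      = u ^ n * Real.exp (-x * u) * g u := by
    rw [← mul_assoc, ← mul_assoc, ← mul_pow]; simp
  rw [this]
  have := hg u hu
  positivity

/-- Post-Widder type positivity. -/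
lemma lap_inv {g : ℝ → ℝ} {C : ℝ} (hg : LapOK g C)
    (h : ∀ (n : ℕ), ∀ x > 0, 0 ≤ (-1 : ℝ) ^ n * Lap g n x) : ∀ u > 0, 0 ≤ g u := by
  intro v hv
  by_contra! hneg
  obtain ⟨c, hc, hgc⟩ : ∃ c > 0, g v < -c := ⟨-g v / 2, by linarith, by linarith⟩
  have hcont : ContinuousAt g v := hg.1.continuousAt (Ioi_mem_nhds hv)
  obtain ⟨δ, hδ, hball⟩ := Metric.eventually_nhds_iff.1 (hcont.eventually_lt_const hgc)
  have hC : 0 ≤ C := by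
    have := (abs_nonneg _).trans (hg.2 1 one_pos)
    linarith
  -- pointwise quadratic upper bound
  obtain ⟨K, hK, hquad⟩ : ∃ K ≥ 0, ∀ u > 0, g u ≤ -c + K * (u - v) ^ 2 := by
    refine ⟨(C * (1 + v) + c) / δ ^ 2 + C / δ, by positivity, fun u hu => ?_⟩
    by_cases hd : dist u v < δ
    · have := hball hd
      have : 0 ≤ ((C * (1 + v) + c) / δ ^ 2 + C / δ) * (u - v) ^ 2 := by positivity
      linarith
    · rw [Real.dist_eq, not_lt] at hd
      have h1 := (le_abs_self _).trans (hg.2 u hu)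
      have h2 : u ≤ v + |u - v| := by linarith [le_abs_self (u - v)]
      have h3 : (u - v) ^ 2 = |u - v| ^ 2 := (sq_abs _).symm
      rw [h3]
      set d := |u - v|
      have h4 : C * (1 + v) + c ≤ (C * (1 + v) + c) / δ ^ 2 * d ^ 2 := by
        rw [div_mul_eq_mul_div, le_div_iff₀ (by positivity)]
        gcongr
      have h5 : C * d ≤ C / δ * d ^ 2 := by
        rw [div_mul_eq_mul_div, le_div_iff₀ (by positivity)]
        nlinarith [mul_nonneg (mul_nonneg hC (hδ.le.trans hd)) (sub_nonneg.2 hd)]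
      have h6 : C * (1 + u) ≤ C * (1 + v) + C * d := by nlinarith
      linarith
  have key : ∀ n : ℕ, c ≤ K * (v ^ 2 / (n + 1)) := by
    intro n
    set x : ℝ := (n + 1) / v with hxdef
    have hx : 0 < x := by positivity
    have h0 := h n x hx
    unfold Lap at h0
    rw [← integral_const_mul] at h0
    have e0 : IntegrableOn (fun u : ℝ => u ^ n * Real.exp (-x * u)) (Set.Ioi 0) := aux_mom_int n hx
    have e1 := aux_mom_int (n + 1) hx
    have e2 := aux_mom_int (n + 2) hx
    have hle : ∫ u in Set.Ioi (0 : ℝ), (-1 : ℝ) ^ n * ((-u) ^ n * Real.exp (-x * u) * g u) ≤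
        ∫ u in Set.Ioi (0 : ℝ), ((-c + K * v ^ 2) * (u ^ n * Real.exp (-x * u))
          + (-(2 * K * v)) * (u ^ (n + 1) * Real.exp (-x * u))
          + K * (u ^ (n + 2) * Real.exp (-x * u))) := by
      refine setIntegral_mono_on ((lap_int hg n hx).const_mul _)
        (((e0.const_mul _).add (e1.const_mul _)).add (e2.const_mul _)) measurableSet_Ioi ?_
      intro u hu
      have hu' : 0 < u := hu
      have : (-1 : ℝ) ^ n * ((-u) ^ n * Real.exp (-x * u) * g u)
          = u ^ n * Real.exp (-x * u) * g u := by
        rw [← mul_assoc, ← mul_assoc, ← mul_pow]; simp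
      rw [this]
      calc u ^ n * Real.exp (-x * u) * g u
          ≤ u ^ n * Real.exp (-x * u) * (-c + K * (u - v) ^ 2) := by
            gcongr
            exact hquad u hu
        _ = _ := by ring
    have e01 : IntegrableOn (fun u : ℝ => (-c + K * v ^ 2) * (u ^ n * Real.exp (-x * u))
          + (-(2 * K * v)) * (u ^ (n + 1) * Real.exp (-x * u))) (Set.Ioi 0) :=
      (e0.const_mul _).add (e1.const_mul _)
    have h1 := h0.trans hle
    rw [integral_add e01 (e2.const_mul _),
      integral_add (e0.const_mul _) (e1.const_mul _), integral_const_mul, integral_const_mul,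
      integral_const_mul, aux_mom n hx, aux_mom (n + 1) hx, aux_mom (n + 2) hx] at h1
    have hM : 0 < (n.factorial : ℝ) / x ^ (n + 1) := by positivity
    have f1 : ((n + 1).factorial : ℝ) / x ^ (n + 1 + 1) = (n.factorial : ℝ) / x ^ (n + 1) * v := by
      rw [Nat.factorial_succ, pow_succ x (n + 1)]
      push_cast
      rw [hxdef]
      field_simp
    have f2 : ((n + 2).factorial : ℝ) / x ^ (n + 2 + 1)
        = (n.factorial : ℝ) / x ^ (n + 1) * (v ^ 2 * (1 + 1 / (n + 1))) := by
      rw [Nat.factorial_succ, Nat.factorial_succ, show n + 2 + 1 = (n + 1) + 2 by ring,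
        pow_add x (n + 1) 2]
      push_cast
      rw [hxdef]
      field_simp
    rw [f1, f2] at h1
    have h2 : 0 ≤ (n.factorial : ℝ) / x ^ (n + 1) * (-c + K * (v ^ 2 / (n + 1))) := by
      refine h1.trans (le_of_eq ?_)
      ring
    have := (mul_nonneg_iff_of_pos_left hM).1 h2
    linarith
  obtain ⟨n, hn⟩ := exists_nat_gt (K * v ^ 2 / c)
  have := key n
  rw [← mul_div_assoc, le_div_iff₀ (by positivity)] at this
  rw [div_lt_iff₀ hc] at hn
  nlinarith

/-- the trigamma kernel -/
noncomputable def tauK (t : ℝ) : ℝ := t / (1 - Real.exp (-t))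

lemma one_sub_exp_pos {t : ℝ} (ht : 0 < t) : 0 < 1 - Real.exp (-t) := by
  have : Real.exp (-t) < 1 := Real.exp_lt_one_iff.2 (by linarith)
  linarith

lemma tauK_le {t : ℝ} (ht : 0 < t) : tauK t ≤ 1 + t := by
  unfold tauK
  rw [div_le_iff₀ (one_sub_exp_pos ht)]
  have h1 : 1 + t ≤ Real.exp t := by linarith [Real.add_one_le_exp t]
  have h2 : (1 + t) * Real.exp (-t) ≤ 1 := by
    rw [Real.exp_neg, ← div_eq_mul_inv, div_le_one (Real.exp_pos _)]
    exact h1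
  nlinarith

lemma tauK_nonneg {t : ℝ} (ht : 0 < t) : 0 ≤ tauK t :=
  div_nonneg ht.le (one_sub_exp_pos ht).le

lemma tauK_ok : LapOK tauK 1 := by
  refine ⟨?_, fun u hu => ?_⟩
  · unfold tauK
    refine ContinuousOn.div (by fun_prop) (by fun_prop) fun t ht => (one_sub_exp_pos ht).ne'
  · rw [abs_of_nonneg (tauK_nonneg hu), one_mul]
    exact tauK_le hu

lemma trig_nonneg (y : ℝ) : 0 ≤ Lap tauK 0 y := by
  simpa using lap_pos (fun u hu => tauK_nonneg hu) 0 y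

lemma trig_le {y : ℝ} (hy : 0 < y) : Lap tauK 0 y ≤ 1 / y + 1 / y ^ 2 := by
  have e0 := aux_mom_int 0 hy
  have e1 := aux_mom_int 1 hy
  have : Lap tauK 0 y ≤ ∫ u in Set.Ioi (0 : ℝ), (u ^ 0 * Real.exp (-y * u)
      + u ^ 1 * Real.exp (-y * u)) := by
    refine setIntegral_mono_on (lap_int tauK_ok 0 hy) (e0.add e1) measurableSet_Ioi fun u hu => ?_
    calc (-u) ^ 0 * Real.exp (-y * u) * tauK u = Real.exp (-y * u) * tauK u := by simp
      _ ≤ Real.exp (-y * u) * (1 + u) := by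
        gcongr
        exact tauK_le hu
      _ = _ := by ring
  rw [integral_add e0 e1, aux_mom 0 hy, aux_mom 1 hy] at this
  simpa using this

lemma trig_add_one {y : ℝ} (hy : 0 < y) : Lap tauK 0 (y + 1) = Lap tauK 0 y - 1 / y ^ 2 := by
  have h1 := aux_mom 1 hy
  have : Lap tauK 0 y - Lap tauK 0 (y + 1) = ∫ u in Set.Ioi (0 : ℝ), u ^ 1 * Real.exp (-y * u) := by
    unfold Lap
    rw [← integral_sub (lap_int tauK_ok 0 hy) (lap_int tauK_ok 0 (by linarith))]
    refine setIntegral_congr_fun measurableSet_Ioi fun u hu => ?_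
    have := (one_sub_exp_pos hu).ne'
    have he : Real.exp (-(y + 1) * u) = Real.exp (-y * u) * Real.exp (-u) := by
      rw [← Real.exp_add]; ring_nf
    simp only [tauK, pow_zero, one_mul, pow_one]
    rw [he]
    field_simp
  rw [h1] at this
  simp at this
  rw [one_div]
  linarith

lemma trig_cont {y : ℝ} (hy : 0 < y) : ContinuousAt (Lap tauK 0) y :=
  (lap_hasDerivAt tauK_ok 0 hy).continuousAt

lemma trig_prim : ∃ J : ℝ → ℝ, ∀ y > 0, HasDerivAt J (Lap tauK 0 y) y := by
  refine ⟨fun y => ∫ s in (1 : ℝ)..y, Lap tauK 0 s, fun y hy => ?_⟩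
  have hc : ContinuousOn (Lap tauK 0) (Set.Ioi 0) :=
    fun z hz => (trig_cont hz).continuousWithinAt
  refine intervalIntegral.integral_hasDerivAt_right ?_ ?_ (trig_cont hy)
  · refine (hc.mono fun z hz => ?_).intervalIntegrable
    rw [Set.mem_uIcc] at hz
    rcases hz with hz | hz
    · exact lt_of_lt_of_le one_pos hz.1
    · exact lt_of_lt_of_le hy hz.1
  · exact hc.stronglyMeasurableAtFilter isOpen_Ioi y hy

/-- log Gamma -/
noncomputable def lG (y : ℝ) : ℝ := Real.log (Real.Gamma y)

lemma gamma_contDiffAt {y : ℝ} (hy : 0 < y) : ContDiffAt ℝ (⊤ : ℕ∞) Real.Gamma y := by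
  have hd : DifferentiableOn ℂ Complex.Gamma {z : ℂ | 0 < z.re} := by
    intro z hz
    refine (Complex.differentiableAt_Gamma z fun m hm => ?_).differentiableWithinAt
    have hz' : 0 < z.re := hz
    rw [hm] at hz'
    simp at hz'
    have : (0 : ℝ) ≤ m := Nat.cast_nonneg m
    linarith
  have ho : IsOpen {z : ℂ | 0 < z.re} := isOpen_lt continuous_const Complex.continuous_re
  have ha : AnalyticAt ℂ Complex.Gamma (y : ℂ) :=
    hd.analyticAt (ho.mem_nhds (by simpa using hy))
  have := (ha.contDiffAt (n := ((⊤ : ℕ∞) : WithTop ℕ∞))).real_of_complex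
  exact this

lemma lG_contDiffAt {y : ℝ} (hy : 0 < y) : ContDiffAt ℝ (⊤ : ℕ∞) lG y :=
  (gamma_contDiffAt hy).log (Real.Gamma_pos_of_pos hy).ne'

lemma lG_diff {y : ℝ} (hy : 0 < y) : DifferentiableAt ℝ lG y :=
  (lG_contDiffAt hy).differentiableAt (by simp)

lemma lG_diff2 {y : ℝ} (hy : 0 < y) : DifferentiableAt ℝ (deriv lG) y := by
  have h : ContDiffOn ℝ (1 + 1) lG (Set.Ioi 0) := fun z hz =>
    ((lG_contDiffAt hz).of_le (by
      have : ((1 : WithTop ℕ∞) + 1) = ((2 : ℕ∞) : WithTop ℕ∞) := by norm_num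
      rw [this]
      exact_mod_cast le_top)).contDiffWithinAt
  rw [contDiffOn_succ_iff_deriv_of_isOpen isOpen_Ioi] at h
  exact (h.2.2.contDiffAt (Ioi_mem_nhds hy)).differentiableAt (by simp)

lemma lG_add_one {y : ℝ} (hy : 0 < y) : lG (y + 1) = lG y + Real.log y := by
  unfold lG
  rw [Real.Gamma_add_one hy.ne', Real.log_mul hy.ne' (Real.Gamma_pos_of_pos hy).ne', add_comm]

lemma psi_add_one_s6 {y : ℝ} (hy : 0 < y) : deriv lG (y + 1) = deriv lG y + y⁻¹ := by
  have h1 : HasDerivAt (fun z => lG (z + 1)) (deriv lG (y + 1)) y :=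
    HasDerivAt.comp_add_const y 1 (lG_diff (by linarith)).hasDerivAt
  have h2 : HasDerivAt (fun z => lG z + Real.log z) (deriv lG y + y⁻¹) y :=
    (lG_diff hy).hasDerivAt.add (Real.hasDerivAt_log hy.ne')
  refine h1.unique (h2.congr_of_eventuallyEq ?_)
  filter_upwards [Ioi_mem_nhds hy] with z hz using lG_add_one hz

lemma tri_add_one {y : ℝ} (hy : 0 < y) :
    deriv (deriv lG) (y + 1) = deriv (deriv lG) y - 1 / y ^ 2 := by
  have h1 : HasDerivAt (fun z => deriv lG (z + 1)) (deriv (deriv lG) (y + 1)) y :=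
    HasDerivAt.comp_add_const y 1 (lG_diff2 (by linarith)).hasDerivAt
  have h2 : HasDerivAt (fun z => deriv lG z + z⁻¹) (deriv (deriv lG) y + -(y ^ 2)⁻¹) y :=
    (lG_diff2 hy).hasDerivAt.add (hasDerivAt_inv hy.ne')
  have := h1.unique (h2.congr_of_eventuallyEq (by
    filter_upwards [Ioi_mem_nhds hy] with z hz using psi_add_one_s6 hz))
  rw [this, one_div]
  ring

lemma tri_nonneg {y : ℝ} (hy : 0 < y) : 0 ≤ deriv (deriv lG) y := by
  have h : MonotoneOn (deriv lG) (Set.Ioi 0) :=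
    ConvexOn.monotoneOn_deriv Real.convexOn_log_Gamma fun x hx => lG_diff hx
  rw [← derivWithin_of_isOpen isOpen_Ioi hy]
  exact h.derivWithin_nonneg

lemma diff_periodic {y : ℝ} (hy : 0 < y) (n : ℕ) :
    deriv (deriv lG) (y + n) - Lap tauK 0 (y + n) = deriv (deriv lG) y - Lap tauK 0 y := by
  induction n with
  | zero => simp
  | succ n ih =>
    have : 0 < y + n := by positivity
    rw [Nat.cast_succ, ← add_assoc, tri_add_one this, trig_add_one this, ← ih]
    ring

lemma tendsto_aux (y : ℝ) : Filter.Tendsto (fun n : ℕ => (1 : ℝ) / (y + n)) Filter.atTop (nhds 0) := by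
  simp only [one_div]
  exact tendsto_inv_atTop_zero.comp
    (Filter.tendsto_atTop_add_const_left _ y tendsto_natCast_atTop_atTop)

lemma diff_nonneg {y : ℝ} (hy : 0 < y) : 0 ≤ deriv (deriv lG) y - Lap tauK 0 y := by
  have ht : Filter.Tendsto (fun n : ℕ => -((1 : ℝ) / (y + n) + (1 / (y + n)) ^ 2))
      Filter.atTop (nhds 0) := by
    simpa using ((tendsto_aux y).add ((tendsto_aux y).pow 2)).neg
  refine le_of_tendsto' ht fun n => ?_
  have hyn : 0 < y + n := by positivity
  rw [← diff_periodic hy n]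
  have h1 := trig_le hyn
  have h2 := tri_nonneg hyn
  rw [one_div_pow]
  linarith

lemma tri_eq {y : ℝ} (hy : 0 < y) : deriv (deriv lG) y = Lap tauK 0 y := by
  obtain ⟨J, hJ⟩ := trig_prim
  set Φ : ℝ → ℝ := fun z => deriv lG z - J z with hΦ
  have hd : ∀ z > 0, HasDerivAt Φ (deriv (deriv lG) z - Lap tauK 0 z) z := fun z hz =>
    (lG_diff2 hz).hasDerivAt.sub (hJ z hz)
  have hmono : MonotoneOn Φ (Set.Ioi 0) := by
    refine monotoneOn_of_deriv_nonneg (convex_Ioi 0)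
      (fun z hz => (hd z hz).continuousAt.continuousWithinAt) ?_ ?_
    · rw [interior_Ioi]
      exact fun z hz => (hd z hz).differentiableAt.differentiableWithinAt
    · rw [interior_Ioi]
      intro z hz
      rw [(hd z hz).deriv]
      exact diff_nonneg hz
  have hJmono : MonotoneOn J (Set.Ioi 0) := by
    refine monotoneOn_of_deriv_nonneg (convex_Ioi 0)
      (fun z hz => (hJ z hz).continuousAt.continuousWithinAt) ?_ ?_
    · rw [interior_Ioi]
      exact fun z hz => (hJ z hz).differentiableAt.differentiableWithinAt
    · rw [interior_Ioi]
      intro z hz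
      rw [(hJ z hz).deriv]
      exact trig_nonneg z
  have hdd : ∀ z > 0, HasDerivAt (fun z => Φ (z + 1) - Φ z) 0 z := by
    intro z hz
    have h1 := HasDerivAt.comp_add_const z 1 (hd (z + 1) (by linarith))
    have h2 := h1.sub (hd z hz)
    have h3 := diff_periodic hz 1
    rw [Nat.cast_one] at h3
    rw [h3, sub_self] at h2
    exact h2
  have hconst : ∀ z > 0, ∀ w > 0, Φ (z + 1) - Φ z = Φ (w + 1) - Φ w := fun z hz w hw =>
    IsOpen.is_const_of_deriv_eq_zero (f := fun z => Φ (z + 1) - Φ z) isOpen_Ioi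
      (convex_Ioi (0 : ℝ)).isPreconnected
      (fun x hx => (hdd x hx).differentiableAt.differentiableWithinAt)
      (fun x hx => (hdd x hx).deriv) hz hw
  have hper : ∀ z > 0, Φ (z + 1) = Φ z := by
    intro z hz
    have h1 : Φ z ≤ Φ (z + 1) := hmono hz (Set.mem_Ioi.2 (by linarith)) (by linarith)
    have h2 : Φ (z + 1) - Φ z ≤ 0 := by
      refine ge_of_tendsto' (tendsto_aux z) fun n => ?_
      have hzn : 0 < z + n := by positivity
      rw [hconst z hz (z + n) hzn]
      have := hJmono (Set.mem_Ioi.2 hzn) (Set.mem_Ioi.2 (by linarith : 0 < z + n + 1)) (by linarith)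
      simp only [hΦ]
      rw [psi_add_one_s6 hzn, one_div]
      linarith
    linarith
  -- derivative zero, since Φ is constant on [y, y+1]
  have hallconst : ∀ w > 0, ∀ z ∈ Set.Icc w (w + 1), Φ z = Φ w := by
    intro w hw z hz
    have hz0 : 0 < z := lt_of_lt_of_le hw hz.1
    have h1 := hmono (Set.mem_Ioi.2 hw) (Set.mem_Ioi.2 hz0) hz.1
    have h2 := hmono (Set.mem_Ioi.2 hz0) (Set.mem_Ioi.2 (by linarith : 0 < w + 1)) hz.2
    rw [hper _ hw] at h2
    linarith
  set w := max (y / 2) (y - 1 / 2) with hw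
  have hw0 : 0 < w := lt_of_lt_of_le (by linarith) (le_max_left _ _)
  have hwy : w < y := max_lt (by linarith) (by linarith)
  have hyw : y < w + 1 := by linarith [le_max_right (y / 2) (y - 1 / 2)]
  have h0 : HasDerivAt Φ 0 y := by
    refine (hasDerivAt_const y (Φ w)).congr_of_eventuallyEq ?_
    filter_upwards [Icc_mem_nhds hwy hyw] with z hz using hallconst w hw0 z hz
  have := (hd y hy).unique h0
  linarith

/-- the kernel attached to one gamma factor -/
noncomputable def kerG (A a u : ℝ) : ℝ := u * (Real.exp (-a * u / A) / (1 - Real.exp (-u / A)))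

lemma kerG_eq {A : ℝ} (hA : 0 < A) (a u : ℝ) :
    kerG A a u = A * Real.exp (-a * (A⁻¹ * u)) * tauK (A⁻¹ * u) := by
  unfold kerG tauK
  have e1 : -a * u / A = -a * (A⁻¹ * u) := by field_simp
  have e2 : -u / A = -(A⁻¹ * u) := by field_simp
  rw [e1, e2]
  field_simp

lemma kerG_ok {A a : ℝ} (hA : 0 < A) (ha : 0 ≤ a) : LapOK (kerG A a) (A + 1) := by
  refine ⟨?_, fun u hu => ?_⟩
  · have hc : ContinuousOn (fun u => tauK (A⁻¹ * u)) (Set.Ioi 0) :=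
      tauK_ok.1.comp (by fun_prop) fun u hu => by
        have hu' : 0 < u := hu
        exact Set.mem_Ioi.2 (by positivity)
    have : ContinuousOn (fun u => A * Real.exp (-a * (A⁻¹ * u)) * tauK (A⁻¹ * u)) (Set.Ioi 0) :=
      ContinuousOn.mul (by fun_prop) hc
    exact this.congr fun u _ => kerG_eq hA a u
  · have hs : 0 < A⁻¹ * u := by positivity
    rw [kerG_eq hA, abs_of_nonneg (mul_nonneg (by positivity) (tauK_nonneg hs))]
    have h1 : Real.exp (-a * (A⁻¹ * u)) ≤ 1 := by
      rw [Real.exp_le_one_iff]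
      have := mul_nonneg ha hs.le
      linarith
    calc A * Real.exp (-a * (A⁻¹ * u)) * tauK (A⁻¹ * u) ≤ A * 1 * (1 + A⁻¹ * u) := by
          have := tauK_nonneg hs
          have := tauK_le hs
          gcongr
      _ = A + u := by field_simp
      _ ≤ (A + 1) * (1 + u) := by nlinarith

lemma kerG_lap {A : ℝ} (hA : 0 < A) (a x : ℝ) :
    Lap (kerG A a) 0 x = A ^ 2 * Lap tauK 0 (A * x + a) := by
  have h := integral_comp_mul_left_Ioi
    (fun t : ℝ => A * ((-t) ^ 0 * Real.exp (-(A * x + a) * t) * tauK t)) 0 (inv_pos.2 hA)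
  rw [mul_zero, inv_inv, smul_eq_mul] at h
  unfold Lap
  rw [pow_two, mul_assoc, ← integral_const_mul, ← h]
  refine setIntegral_congr_fun measurableSet_Ioi fun u _ => ?_
  have he : Real.exp (-(A * x + a) * (A⁻¹ * u))
      = Real.exp (-x * u) * Real.exp (-a * (A⁻¹ * u)) := by
    rw [← Real.exp_add]
    congr 1
    field_simp
    ring
  simp only [pow_zero, one_mul]
  rw [he, kerG_eq hA]
  ring

lemma LapOK.sum {m : ℕ} {g : Fin m → ℝ → ℝ} {C : Fin m → ℝ} (h : ∀ i, LapOK (g i) (C i)) :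
    LapOK (fun u => ∑ i, g i u) (∑ i, C i) := by
  refine ⟨continuousOn_finsetSum _ fun i _ => (h i).1, fun u hu => ?_⟩
  rw [Finset.sum_mul]
  exact (Finset.abs_sum_le_sum_abs _ _).trans (Finset.sum_le_sum fun i _ => (h i).2 u hu)

lemma LapOK.sub {f g : ℝ → ℝ} {C D : ℝ} (hf : LapOK f C) (hg : LapOK g D) :
    LapOK (fun u => f u - g u) (C + D) := by
  refine ⟨hf.1.sub hg.1, fun u hu => ?_⟩
  rw [add_mul]
  exact (abs_sub _ _).trans (add_le_add (hf.2 u hu) (hg.2 u hu))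

lemma lap_sum {m : ℕ} {g : Fin m → ℝ → ℝ} {C : Fin m → ℝ} (h : ∀ i, LapOK (g i) (C i))
    {x : ℝ} (hx : 0 < x) : Lap (fun u => ∑ i, g i u) 0 x = ∑ i, Lap (g i) 0 x := by
  unfold Lap
  simp only [Finset.mul_sum]
  exact integral_finsetSum _ fun i _ => lap_int (h i) 0 hx

lemma lap_sub {f g : ℝ → ℝ} {C D : ℝ} (hf : LapOK f C) (hg : LapOK g D)
    {x : ℝ} (hx : 0 < x) : Lap (fun u => f u - g u) 0 x = Lap f 0 x - Lap g 0 x := by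
  unfold Lap
  simp only [mul_sub]
  exact integral_sub (lap_int hf 0 hx) (lap_int hg 0 hx)

lemma lG_aff1 {A a y : ℝ} (hA : 0 < A) (ha : 0 ≤ a) (hy : 0 < y) :
    HasDerivAt (fun y => lG (A * y + a)) (A * deriv lG (A * y + a)) y := by
  have h0 : 0 < A * y + a := by positivity
  have h1 : HasDerivAt (fun y : ℝ => A * y + a) A y := by
    simpa using ((hasDerivAt_id y).const_mul A).add_const a
  have := (lG_diff h0).hasDerivAt.comp y h1
  rw [mul_comm] at this
  exact this

lemma lG_aff2 {A a y : ℝ} (hA : 0 < A) (ha : 0 ≤ a) (hy : 0 < y) :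
    HasDerivAt (fun y => A * deriv lG (A * y + a)) (Lap (kerG A a) 0 y) y := by
  have h0 : 0 < A * y + a := by positivity
  have h1 : HasDerivAt (fun y : ℝ => A * y + a) A y := by
    simpa using ((hasDerivAt_id y).const_mul A).add_const a
  have := ((lG_diff2 h0).hasDerivAt.comp y h1).const_mul A
  rw [tri_eq h0] at this
  rw [kerG_lap hA]
  refine this.congr_deriv ?_
  ring

theorem stmt6 (p q : ℕ) (hp : 1 ≤ p) (hq : 1 ≤ q)
    (A : Fin p → ℝ) (B : Fin q → ℝ) (a : Fin p → ℝ) (b : Fin q → ℝ)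
    (hA : ∀ i, 0 < A i) (hB : ∀ j, 0 < B j)
    (ha : ∀ i, 0 ≤ a i) (hb : ∀ j, 0 ≤ b j)
    (W : ℝ → ℝ)
    (hW : ∀ x, W x = (∏ i, Real.Gamma (A i * x + a i)) / ∏ j, Real.Gamma (B j * x + b j))
    (P : ℝ → ℝ)
    (hP : ∀ u, P u = (∑ i, Real.exp (-a i * u / A i) / (1 - Real.exp (-u / A i))) -
      ∑ j, Real.exp (-b j * u / B j) / (1 - Real.exp (-u / B j))) :
    (CompletelyMonotonicOn (deriv (deriv (fun y => Real.log (W y)))) ↔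
        ∀ u > (0 : ℝ), 0 ≤ P u) ∧
      ((∀ u > (0 : ℝ), 0 ≤ P u) → ∀ x > (0 : ℝ),
        deriv (deriv (fun y => Real.log (W y))) x =
          ∫ u in Set.Ioi (0 : ℝ), Real.exp (-x * u) * u * P u) := by
  classical
  have hkA : ∀ i, LapOK (kerG (A i) (a i)) (A i + 1) := fun i => kerG_ok (hA i) (ha i)
  have hkB : ∀ j, LapOK (kerG (B j) (b j)) (B j + 1) := fun j => kerG_ok (hB j) (hb j)
  have hok0 := (LapOK.sum hkA).sub (LapOK.sum hkB)
  set g : ℝ → ℝ := fun u => (∑ i, kerG (A i) (a i) u) - ∑ j, kerG (B j) (b j) u with hg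
  have hgP : ∀ u, g u = u * P u := by
    intro u
    rw [hP, mul_sub, Finset.mul_sum, Finset.mul_sum]
    rfl
  have hf : ∀ x > 0, deriv (deriv (fun y => Real.log (W y))) x = Lap g 0 x := by
    have hlog : ∀ y > 0, Real.log (W y)
        = (∑ i, lG (A i * y + a i)) - ∑ j, lG (B j * y + b j) := by
      intro y hy
      have pA : ∀ i, 0 < Real.Gamma (A i * y + a i) := fun i =>
        Real.Gamma_pos_of_pos (add_pos_of_pos_of_nonneg (mul_pos (hA i) hy) (ha i))
      have pB : ∀ j, 0 < Real.Gamma (B j * y + b j) := fun j =>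
        Real.Gamma_pos_of_pos (add_pos_of_pos_of_nonneg (mul_pos (hB j) hy) (hb j))
      rw [hW, Real.log_div (Finset.prod_pos fun i _ => pA i).ne'
        (Finset.prod_pos fun i _ => pB i).ne',
        Real.log_prod fun i _ => (pA i).ne', Real.log_prod fun i _ => (pB i).ne']
      rfl
    have hd1 : ∀ y > 0, deriv (fun y => Real.log (W y)) y
        = (∑ i, A i * deriv lG (A i * y + a i)) - ∑ j, B j * deriv lG (B j * y + b j) := by
      intro y hy
      have h1 : HasDerivAt (fun y => (∑ i, lG (A i * y + a i)) - ∑ j, lG (B j * y + b j))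
          ((∑ i, A i * deriv lG (A i * y + a i)) - ∑ j, B j * deriv lG (B j * y + b j)) y :=
        (HasDerivAt.fun_sum fun i _ => lG_aff1 (hA i) (ha i) hy).sub
          (HasDerivAt.fun_sum fun j _ => lG_aff1 (hB j) (hb j) hy)
      refine (h1.congr_of_eventuallyEq ?_).deriv
      filter_upwards [Ioi_mem_nhds hy] with z hz using hlog z hz
    intro x hx
    have h2 : HasDerivAt (fun y => (∑ i, A i * deriv lG (A i * y + a i))
          - ∑ j, B j * deriv lG (B j * y + b j))
        ((∑ i, Lap (kerG (A i) (a i)) 0 x) - ∑ j, Lap (kerG (B j) (b j)) 0 x) x :=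
      (HasDerivAt.fun_sum fun i _ => lG_aff2 (hA i) (ha i) hx).sub
        (HasDerivAt.fun_sum fun j _ => lG_aff2 (hB j) (hb j) hx)
    rw [hg, lap_sub (LapOK.sum hkA) (LapOK.sum hkB) hx, lap_sum hkA hx, lap_sum hkB hx]
    refine (h2.congr_of_eventuallyEq ?_).deriv
    filter_upwards [Ioi_mem_nhds hx] with z hz using hd1 z hz
  have hev : ∀ x > 0, deriv (deriv (fun y => Real.log (W y))) =ᶠ[nhds x] Lap g 0 := fun x hx => by
    filter_upwards [Ioi_mem_nhds hx] with z hz using hf z hz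
  have hgpos : (∀ u > (0 : ℝ), 0 ≤ P u) ↔ ∀ u > (0 : ℝ), 0 ≤ g u := by
    refine forall₂_congr fun u hu => ?_
    rw [hgP, mul_nonneg_iff_of_pos_left hu]
  refine ⟨⟨fun h => ?_, fun h => ⟨fun x hx => ?_, fun n x hx => ?_⟩⟩, fun _ x hx => ?_⟩
  · rw [hgpos]
    refine lap_inv hok0 fun n x hx => ?_
    have := h.2 n x hx
    rwa [(hev x hx).iteratedDeriv_eq n, lap_iter hok0 n x hx] at this
  · exact (lap_contDiffAt hok0 hx).congr_of_eventuallyEq (hev x hx)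
  · rw [(hev x hx).iteratedDeriv_eq n, lap_iter hok0 n x hx]
    exact lap_pos (hgpos.1 h) n x
  · rw [hf x hx]
    unfold Lap
    refine setIntegral_congr_fun measurableSet_Ioi fun u _ => ?_
    simp only [pow_zero, one_mul]
    rw [hgP]
    ring
end
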